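/- arXiv:0911.5472 — 2 statements merged into one kernel-verified Lean document; each statement's English description precedes it below -/
import Mathlib

section
/- Case F1: Let l be a prime with l ≡ 1 (mod 4), let r ≥ 1, and let N = 4 l^r. Suppose p ≡ 3 (mod 4), the multiplicative order of p modulo l^r is φ(l^r), and f = φ(N)/2 (so f = φ(l^r) and 4 divides f). Then there exist integers a, b such that a² + l b² = p^{f/2}, a ≡ -p^{f/4} (mod l), and G(χ) = p^{f/4} (a + b √-l). -/
open Complex Polynomial IntermediateField

/-- The complex primitive `p`-th root of unity `exp(2πi/p)`. -/
noncomputable def zetaP (p : ℕ) : ℂ := Complex.exp (2 * Real.pi * Complex.I / p)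

/-- The Gauss sum `G(χ^λ) = ∑_{x ∈ F, x ≠ 0} χ^λ(x) ζ_p^{T(x)}`, where
`T` is the trace map from `F` down to `ZMod p`. -/
noncomputable def gaussSumN (p : ℕ) {F : Type} [Field F] [Fintype F] [Algebra (ZMod p) F]
    (χ : MulChar F ℂ) (lam : ℕ) : ℂ :=
  letI : DecidableEq F := Classical.decEq F
  ∑ x ∈ Finset.univ.filter (fun x : F => x ≠ 0),
    (χ ^ lam) x * zetaP p ^ (Algebra.trace (ZMod p) F x).val

/-- `√-m = i√m ∈ ℂ`. -/
noncomputable def sqrtNeg (m : ℕ) : ℂ := Real.sqrt m * Complex.I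

theorem sqrtNeg_sq (m : ℕ) : sqrtNeg m ^ 2 = -(m : ℂ) := by
  have h : ((Real.sqrt m : ℝ) : ℂ) ^ 2 = ((m : ℝ) : ℂ) := by
    rw [← Complex.ofReal_pow, Real.sq_sqrt (by positivity)]
  simp only [sqrtNeg, mul_pow, Complex.I_sq, h]
  push_cast
  ring

theorem isIntegral_sqrtNeg (m : ℕ) : IsIntegral ℚ (sqrtNeg m) := by
  refine ⟨X ^ 2 + C (m : ℚ), monic_X_pow_add_C _ (by norm_num), ?_⟩
  simp [sqrtNeg_sq]

/-- The class number `h(ℚ(√-m))` of the quadratic field `ℚ(√-m) ⊆ ℂ`. -/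
noncomputable def classNumSqrtNeg (m : ℕ) : ℕ :=
  haveI : FiniteDimensional ℚ ℚ⟮sqrtNeg m⟯ :=
    IntermediateField.adjoin.finiteDimensional (isIntegral_sqrtNeg m)
  haveI : CharZero ℚ⟮sqrtNeg m⟯ :=
    charZero_of_injective_algebraMap (algebraMap ℚ ℚ⟮sqrtNeg m⟯).injective
  haveI : NumberField ℚ⟮sqrtNeg m⟯ := ⟨⟩
  NumberField.classNumber ℚ⟮sqrtNeg m⟯

/-- `√p* = √p` if `p ≡ 1 (mod 4)` and `i√p` if `p ≡ 3 (mod 4)`. -/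
noncomputable def sqrtPStar (p : ℕ) : ℂ :=
  if p % 4 = 1 then (Real.sqrt p : ℂ) else (Real.sqrt p : ℂ) * Complex.I



section Part1

set_option linter.unusedSectionVars false

variable (p : ℕ) [Fact p.Prime] (F : Type) [Field F] [Fintype F] [Algebra (ZMod p) F]

noncomputable def psiF : AddChar F ℂ :=
  (ZMod.stdAddChar (N := p)).compAddMonoidHom (Algebra.trace (ZMod p) F).toAddMonoidHom

variable {F}

theorem psiF_def (x : F) : psiF p F x = ZMod.stdAddChar (N := p) (Algebra.trace (ZMod p) F x) := rfl

theorem psiF_apply (x : F) : psiF p F x = zetaP p ^ (Algebra.trace (ZMod p) F x).val := by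
  rw [psiF_def]
  set t := Algebra.trace (ZMod p) F x
  have h : ((t.val : ℤ) : ZMod p) = t := by simp
  conv_lhs => rw [← h]
  rw [ZMod.stdAddChar_coe, zetaP, ← Complex.exp_nat_mul]
  congr 1
  push_cast
  ring

theorem gaussSumN_eq (χ : MulChar F ℂ) : gaussSumN p χ 1 = gaussSum χ (psiF p F) := by
  classical
  unfold gaussSumN gaussSum
  rw [Finset.sum_filter]
  refine Finset.sum_congr rfl fun x _ => ?_
  split_ifs with h
  · rw [psiF_apply, pow_one]
  · have : x = 0 := by simpa using h
    subst this; rw [MulChar.map_zero, zero_mul]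

theorem psiF_frob (j : ℕ) (x : F) : psiF p F (x ^ p ^ j) = psiF p F x := by
  have : CharP F p := charP_of_injective_algebraMap (algebraMap (ZMod p) F).injective p
  induction j with
  | zero => simp
  | succ j ih =>
    rw [pow_succ, pow_mul, psiF_def]
    have := Algebra.trace_eq_of_algEquiv (FiniteField.frobeniusAlgEquiv (ZMod p) F p) (x ^ p ^ j)
    simp only [FiniteField.frobeniusAlgEquiv_apply, ZMod.card] at this
    rw [this]; exact ih

theorem psiF_prim : (psiF p F).IsPrimitive := by
  have : CharP F p := charP_of_injective_algebraMap (algebraMap (ZMod p) F).injective p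
  apply AddChar.IsPrimitive.of_ne_one
  intro h
  obtain ⟨x, hx⟩ := Algebra.trace_surjective (ZMod p) F 1
  have h1 : psiF p F x = 1 := by rw [h]; rfl
  rw [psiF_def, hx] at h1
  have h2 := ZMod.injective_stdAddChar (N := p) (h1.trans (AddChar.map_zero_eq_one _).symm)
  exact one_ne_zero h2

theorem gauss_frob (χ : MulChar F ℂ) (j : ℕ) :
    gaussSum (χ ^ p ^ j) (psiF p F) = gaussSum χ (psiF p F) := by
  have : CharP F p := charP_of_injective_algebraMap (algebraMap (ZMod p) F).injective p
  have hp : p.Prime := Fact.out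
  unfold gaussSum
  refine Fintype.sum_bijective (fun x : F => x ^ p ^ j) ?_ _ _ ?_
  · have := (Finite.injective_iff_bijective).1 (iterateFrobenius_inj F p j)
    exact this
  · intro x
    rw [psiF_frob, MulChar.pow_apply' _ (pow_ne_zero _ hp.ne_zero), map_pow]

theorem char_triv (χ : MulChar F ℂ) {M d : ℕ} (hMd : M * d = Fintype.card F - 1) (hχ : χ ^ M = 1)
    {t : F} (ht0 : t ≠ 0) (ht : t ^ d = 1) : χ t = 1 := by
  obtain ⟨g, hg⟩ := IsCyclic.exists_monoid_generator (α := Fˣ)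
  obtain ⟨j, hj⟩ := hg (Units.mk0 t ht0)
  have hq : 0 < Fintype.card F - 1 := by have := Fintype.one_lt_card (α := F); omega
  have hd : 0 < d := by rcases Nat.eq_zero_or_pos d with h | h; simp [h] at hMd; omega; exact h
  have hog : orderOf g = M * d := by
    classical
    rw [hMd, orderOf_eq_card_of_forall_mem_powers hg, Nat.card_eq_fintype_card, Fintype.card_units]
  have h1 : g ^ (j * d) = 1 := by
    rw [pow_mul]
    have : g ^ j = Units.mk0 t ht0 := hj
    rw [this]; ext; simpa using ht
  have h2 := orderOf_dvd_of_pow_eq_one h1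
  rw [hog] at h2
  obtain ⟨i, rfl⟩ := Nat.dvd_of_mul_dvd_mul_right hd h2
  have h3 : t = (g : F) ^ (M * i) := by
    have : g ^ (M * i) = Units.mk0 t ht0 := hj
    have := congrArg Units.val this
    simpa using this.symm
  rw [h3, map_pow, pow_mul, ← MulChar.pow_apply_coe, hχ]
  simp

theorem char_neg_one (χ : MulChar F ℂ)
    (hχ : ∀ t : ZMod p, t ≠ 0 → χ (algebraMap (ZMod p) F t) = 1) : χ (-1) = 1 := by
  have h := hχ (-1) (by simp)
  simpa using h

theorem gauss_mul_inv (χ : MulChar F ℂ) (hχ1 : χ ≠ 1) (h : χ (-1) = 1) :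
    gaussSum χ (psiF p F) * gaussSum χ⁻¹ (psiF p F) = Fintype.card F := by
  rw [← gaussSum_mul_gaussSum_eq_card hχ1 (psiF_prim p)]
  congr 1
  have := mul_gaussSum_inv_eq_gaussSum χ⁻¹ (psiF p F)
  rw [← this]
  have h2 : χ⁻¹ (-1) = 1 := by
    rw [MulChar.inv_apply', inv_neg, inv_one, h]
  rw [h2, one_mul]

theorem gauss_pure (χ : MulChar F ℂ) (hχ1 : χ ≠ 1) (h : χ (-1) = 1) (j : ℕ)
    (hj : χ ^ p ^ j = χ⁻¹) {m : ℕ} (hm : Fintype.card F = p ^ (2 * m)) :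
    gaussSum χ (psiF p F) = p ^ m ∨ gaussSum χ (psiF p F) = - p ^ m := by
  have h1 := gauss_mul_inv p χ hχ1 h
  rw [← hj, gauss_frob, hm] at h1
  apply sq_eq_sq_iff_eq_or_eq_neg.1
  rw [sq, h1]; push_cast; ring

theorem gauss_trace0 [DecidableEq F] (χ : MulChar F ℂ) (hχ1 : χ ≠ 1)
    (hχ : ∀ t : ZMod p, t ≠ 0 → χ (algebraMap (ZMod p) F t) = 1) :
    ((p : ℂ) - 1) * gaussSum χ (psiF p F) =
      p * ∑ x : F, if Algebra.trace (ZMod p) F x = 0 then χ x else 0 := by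
  have key : ∑ t : ZMod p, ∑ x : F, χ x * psiF p F (t • x) =
      ((p : ℂ) - 1) * gaussSum χ (psiF p F) := by
    rw [← Finset.sum_erase_add _ _ (Finset.mem_univ (0 : ZMod p))]
    have h0 : ∑ x : F, χ x * psiF p F ((0 : ZMod p) • x) = 0 := by
      simpa using MulChar.sum_eq_zero_of_ne_one hχ1
    rw [h0, add_zero]
    have h1 : ∀ t ∈ Finset.univ.erase (0 : ZMod p),
        ∑ x : F, χ x * psiF p F (t • x) = gaussSum χ (psiF p F) := by
      intro t ht
      have ht0 : t ≠ 0 := by simpa using ht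
      have hu : algebraMap (ZMod p) F t ≠ 0 := by simpa using ht0
      have := gaussSum_mulShift χ (psiF p F) (Units.mk0 _ hu)
      rw [Units.val_mk0, hχ t ht0, one_mul] at this
      rw [← this]
      unfold gaussSum
      simp [Algebra.smul_def, AddChar.mulShift_apply]
    rw [Finset.sum_congr rfl h1]
    simp [Finset.card_erase_of_mem, ZMod.card, Nat.cast_sub (Fact.out : p.Prime).one_le]
  rw [← key, Finset.sum_comm, Finset.mul_sum]
  refine Finset.sum_congr rfl fun x _ => ?_
  rw [← Finset.mul_sum]
  have := AddChar.sum_mulShift (Algebra.trace (ZMod p) F x) (ZMod.isPrimitive_stdAddChar p)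
  have h2 : ∑ t : ZMod p, psiF p F (t • x) =
      ((if Algebra.trace (ZMod p) F x = 0 then Fintype.card (ZMod p) else 0 : ℕ) : ℂ) := by
    rw [← this]
    refine Finset.sum_congr rfl fun t _ => ?_
    rw [psiF_def, map_smul, smul_eq_mul]
  rw [h2]
  split_ifs <;> simp [ZMod.card, mul_comm]

end Part1


theorem int_dvd_of_integral (m k : ℤ) (r : ℂ) (hr : IsIntegral ℤ r) (h : (m : ℂ) = k * r)
    (hk : k ≠ 0) : k ∣ m := by
  have hkC : (k : ℂ) ≠ 0 := by exact_mod_cast hk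
  have h1 : r = ((m / k : ℚ) : ℂ) := by
    push_cast; field_simp; rw [h]; ring
  rw [h1] at hr
  have h2 : IsIntegral ℤ ((m : ℚ) / k) :=
    (isIntegral_algHom_iff (Rat.castHom ℂ).toIntAlgHom (Rat.castHom ℂ).injective).1 hr
  obtain ⟨y, hy⟩ := IsIntegrallyClosed.isIntegral_iff.1 h2
  refine ⟨y, ?_⟩
  have hkQ : (k : ℚ) ≠ 0 := by exact_mod_cast hk
  have hy' : (y : ℚ) = m / k := by simpa using hy
  have : (m : ℚ) = k * y := by rw [hy']; field_simp
  exact_mod_cast this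

theorem orbit_sum {α : Type} [DecidableEq α] (σ : α → α) (u : α → ℂ) (s : Finset α)
    (hs : ∀ x ∈ s, σ x ∈ s) (h4 : ∀ x ∈ s, σ (σ (σ (σ x))) = x) (h2 : ∀ x ∈ s, σ (σ x) ≠ x)
    (hu : ∀ x ∈ s, u (σ x) = u x) (hi : ∀ x ∈ s, IsIntegral ℤ (u x)) :
    ∃ r : ℂ, IsIntegral ℤ r ∧ ∑ x ∈ s, u x = 4 * r := by
  induction s using Finset.strongInduction with
  | H s ih =>
    rcases s.eq_empty_or_nonempty with rfl | ⟨x, hx⟩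
    · exact ⟨0, isIntegral_zero, by simp⟩
    · have hx1 := hs _ hx
      have hx2 := hs _ hx1
      have hx3 := hs _ hx2
      have inj : ∀ a ∈ s, ∀ b ∈ s, σ a = σ b → a = b := by
        intro a ha b hb hab
        rw [← h4 a ha, hab, h4 b hb]
      have n1 : σ x ≠ x := fun h => h2 x hx (by rw [h, h])
      have n2 := h2 x hx
      have n3 : σ (σ (σ x)) ≠ x := fun h => n1 (by conv_lhs => rw [← h, h4 x hx])
      have n4 : σ (σ x) ≠ σ x := fun h => n1 (inj _ hx1 _ hx h)
      have n5 : σ (σ (σ x)) ≠ σ x := fun h => n2 (inj _ hx2 _ hx h)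
      have n6 : σ (σ (σ x)) ≠ σ (σ x) := fun h => n4 (inj _ hx2 _ hx1 h)
      set o : Finset α := {x, σ x, σ (σ x), σ (σ (σ x))} with ho
      have hos : o ⊆ s := by
        intro y hy
        simp only [ho, Finset.mem_insert, Finset.mem_singleton] at hy
        rcases hy with rfl | rfl | rfl | rfl <;> assumption
      have hxo : x ∈ o := by simp [ho]
      obtain ⟨r, hr, hr2⟩ := ih (s \ o) (Finset.sdiff_ssubset hos ⟨x, hxo⟩)
        (by
          intro y hy
          rw [Finset.mem_sdiff] at hy ⊢
          refine ⟨hs y hy.1, fun h => hy.2 ?_⟩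
          simp only [ho, Finset.mem_insert, Finset.mem_singleton] at h ⊢
          rcases h with h | h | h | h
          · rw [← h4 x hx] at h
            exact Or.inr (Or.inr (Or.inr (inj _ hy.1 _ hx3 h)))
          · exact Or.inl (inj _ hy.1 _ hx h)
          · exact Or.inr (Or.inl (inj _ hy.1 _ hx1 h))
          · exact Or.inr (Or.inr (Or.inl (inj _ hy.1 _ hx2 h))))
        (fun y hy => h4 y (Finset.mem_sdiff.1 hy).1) (fun y hy => h2 y (Finset.mem_sdiff.1 hy).1)
        (fun y hy => hu y (Finset.mem_sdiff.1 hy).1) (fun y hy => hi y (Finset.mem_sdiff.1 hy).1)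
      refine ⟨r + u x, hr.add (hi x hx), ?_⟩
      rw [← Finset.sum_sdiff hos, hr2, ho, Finset.sum_insert, Finset.sum_insert,
        Finset.sum_insert, Finset.sum_singleton, hu _ hx2, hu _ hx1, hu _ hx]
      · ring
      · simpa using n6.symm
      · simp only [Finset.mem_insert, Finset.mem_singleton, not_or]
        exact ⟨n4.symm, n5.symm⟩
      · simp only [Finset.mem_insert, Finset.mem_singleton, not_or]
        exact ⟨n1.symm, n2.symm, n3.symm⟩

theorem isIntegral_of_pow_one {z : ℂ} {n : ℕ} (hn : 0 < n) (h : z ^ n = 1) : IsIntegral ℤ z :=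
  IsIntegral.of_pow hn (h ▸ isIntegral_one)

section Part2

set_option linter.unusedSectionVars false

variable (p : ℕ) [Fact p.Prime] {F : Type} [Field F] [Fintype F] [Algebra (ZMod p) F]

theorem psiF_integral (x : F) : IsIntegral ℤ (psiF p F x) := by
  rw [psiF_apply]
  refine IsIntegral.pow (isIntegral_of_pow_one (n := p) (Fact.out : p.Prime).pos ?_) _
  have := (Complex.isPrimitiveRoot_exp p (Fact.out : p.Prime).ne_zero).pow_eq_one
  exact this

theorem psiF_eq_one_of (hp2 : p ≠ 2) {u : F} (h : psiF p F u = psiF p F (-u)) : psiF p F u = 1 := by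
  rw [psiF_def, psiF_def, map_neg] at h
  have h1 := ZMod.injective_stdAddChar h
  have h2 : Algebra.trace (ZMod p) F u = 0 := by
    have h3 : (2 : ZMod p) * Algebra.trace (ZMod p) F u = 0 := by linear_combination h1
    rcases mul_eq_zero.1 h3 with h | h
    · exfalso
      have : ((2 : ℕ) : ZMod p) = 0 := by exact_mod_cast h
      rw [ZMod.natCast_eq_zero_iff] at this
      exact hp2 ((Nat.prime_dvd_prime_iff_eq Fact.out Nat.prime_two).1 this)
    · exact h
  rw [psiF_def, h2, AddChar.map_zero_eq_one]

theorem frob_add (n : ℕ) (x y : F) : (x + y) ^ p ^ n = x ^ p ^ n + y ^ p ^ n := by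
  have : CharP F p := charP_of_injective_algebraMap (algebraMap (ZMod p) F).injective p
  exact add_pow_char_pow x y p n

theorem psi_K_sum [DecidableEq F] (hp2 : p ≠ 2) (n : ℕ) (hc : Fintype.card F = p ^ (4 * n))
    (x : F) (hx : x ^ p ^ (2 * n) = x) :
    ∑ t ∈ Finset.univ.filter (fun t : F => t ^ p ^ n = t), psiF p F (t * x) =
      if x ^ p ^ n = -x then ((Finset.univ.filter (fun t : F => t ^ p ^ n = t)).card : ℂ) else 0 := by
  have hpp : ∀ z : F, ∀ a b : ℕ, (z ^ p ^ a) ^ p ^ b = z ^ p ^ (a + b) := by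
    intro z a b; rw [← pow_mul, ← pow_add]
  split_ifs with h
  · rw [Finset.sum_congr rfl (g := fun _ => (1 : ℂ)), Finset.sum_const, nsmul_eq_mul, mul_one]
    intro t ht
    have ht' : t ^ p ^ n = t := by simpa using ht
    apply psiF_eq_one_of p hp2
    rw [← psiF_frob p n (t * x), mul_pow, ht', h, mul_neg]
  · -- find t0
    have hy : x + x ^ p ^ n ≠ 0 := fun h0 => h (by linear_combination h0)
    set y := x + x ^ p ^ n with hydef
    have hyK : y ^ p ^ n = y := by
      rw [hydef, frob_add, hpp, ← two_mul, hx, add_comm]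
    obtain ⟨t0, ht0, hne⟩ : ∃ t0 : F, t0 ^ p ^ n = t0 ∧ psiF p F (t0 * x) ≠ 1 := by
      by_contra hcon
      push Not at hcon
      have hz : ∀ z : F, psiF p F z ^ 4 = 1 := by
        intro z
        set v := z + z ^ p ^ n + z ^ p ^ (2 * n) + z ^ p ^ (3 * n) with hv
        have hvK : v ^ p ^ n = v := by
          have hz4 : z ^ p ^ (3 * n + n) = z := by
            rw [show 3 * n + n = 4 * n by ring, ← hc, FiniteField.pow_card]
          rw [hv, frob_add, frob_add, frob_add, hpp, hpp, hpp, hz4,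
            show n + n = 2 * n by ring, show 2 * n + n = 3 * n by ring]
          ring
        have h1 := hcon (v / y) (by rw [div_pow, hvK, hyK])
        have h2 : psiF p F v = 1 := by
          have : v = v / y * x + (v / y * x) ^ p ^ n := by
            rw [mul_pow, div_pow, hvK, hyK, ← mul_add, ← hydef, div_mul_cancel₀ _ hy]
          rw [this, AddChar.map_add_eq_mul, psiF_frob, h1, one_mul]
        rw [hv, AddChar.map_add_eq_mul, AddChar.map_add_eq_mul, AddChar.map_add_eq_mul,
          psiF_frob, psiF_frob, psiF_frob] at h2
        rw [← h2]; ring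
      have hz2 : ∀ z : F, psiF p F z = 1 := by
        intro z
        have a1 : psiF p F (z + z) = 1 := by
          apply psiF_eq_one_of p hp2
          have e1 := hz z
          have e2 : psiF p F (z + z) * psiF p F (-(z + z)) = 1 := by
            rw [← AddChar.map_add_eq_mul, add_neg_cancel, AddChar.map_zero_eq_one]
          have e3 : psiF p F (z + z) * psiF p F (z + z) = 1 := by
            rw [AddChar.map_add_eq_mul, ← e1]; ring
          have e4 : psiF p F (z + z) ≠ 0 := fun h0 => by rw [h0] at e3; simp at e3
          exact mul_left_cancel₀ e4 (e3.trans e2.symm)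
        apply psiF_eq_one_of p hp2
        have e2 : psiF p F z * psiF p F (-z) = 1 := by
          rw [← AddChar.map_add_eq_mul, add_neg_cancel, AddChar.map_zero_eq_one]
        rw [AddChar.map_add_eq_mul] at a1
        have e4 : psiF p F z ≠ 0 := fun h0 => by rw [h0] at a1; simp at a1
        exact mul_left_cancel₀ e4 (a1.trans e2.symm)
      have h1 := psiF_prim p (F := F) (a := 1) one_ne_zero
      apply h1
      ext z
      simpa using hz2 z
    have key : psiF p F (t0 * x) *
        ∑ t ∈ Finset.univ.filter (fun t : F => t ^ p ^ n = t), psiF p F (t * x) =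
        ∑ t ∈ Finset.univ.filter (fun t : F => t ^ p ^ n = t), psiF p F (t * x) := by
      rw [Finset.mul_sum]
      refine Finset.sum_equiv (Equiv.addLeft t0) ?_ ?_
      · intro t
        simp [frob_add, ht0]
      · intro t _
        simp only [Equiv.coe_addLeft]
        rw [add_mul, AddChar.map_add_eq_mul]
    have : (psiF p F (t0 * x) - 1) *
        ∑ t ∈ Finset.univ.filter (fun t : F => t ^ p ^ n = t), psiF p F (t * x) = 0 := by
      rw [sub_mul, key, one_mul, sub_self]
    exact (mul_eq_zero.1 this).resolve_left (sub_ne_zero.2 hne)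

theorem card_K [DecidableEq F] (n : ℕ) (hc : Fintype.card F = p ^ (4 * n)) :
    (Finset.univ.filter (fun t : F => t ^ p ^ n = t)).card = p ^ n := by
  have hQ : 0 < p ^ n := pow_pos (Fact.out : p.Prime).pos n
  have hk := IsCyclic.card_powMonoidHom_ker (G := Fˣ) (p ^ n - 1)
  have hg : (Nat.card Fˣ).gcd (p ^ n - 1) = p ^ n - 1 := by
    apply Nat.gcd_eq_right
    rw [Nat.card_eq_fintype_card, Fintype.card_units, hc, mul_comm, pow_mul]
    simpa using Nat.sub_dvd_pow_sub_pow (p ^ n) 1 4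
  rw [hg] at hk
  have h0 : (0 : F) ∈ Finset.univ.filter (fun t : F => t ^ p ^ n = t) := by
    rw [Finset.mem_filter]; exact ⟨Finset.mem_univ _, zero_pow hQ.ne'⟩
  rw [← Finset.card_erase_add_one h0]
  have : ((Finset.univ.filter (fun t : F => t ^ p ^ n = t)).erase 0).card = p ^ n - 1 := by
    rw [← hk, Nat.card_eq_fintype_card, ← Finset.card_univ]
    symm
    have hpow : ∀ u : F, u ^ p ^ n = u ^ (p ^ n - 1) * u := by
      intro u
      rw [← pow_succ, Nat.sub_add_cancel hQ]
    refine Finset.card_bij (fun u _ => ((u : Fˣ) : F)) ?_ ?_ ?_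
    · rintro ⟨u, hu⟩ _
      have hu' : u ^ (p ^ n - 1) = 1 := hu
      have hu2 : (u : F) ^ (p ^ n - 1) = 1 := by
        rw [← Units.val_pow_eq_pow_val, hu', Units.val_one]
      simp only [Finset.mem_erase, Finset.mem_filter, Finset.mem_univ, true_and]
      exact ⟨u.ne_zero, by rw [hpow, hu2, one_mul]⟩
    · intro a _ b _ hab
      exact Subtype.ext (Units.ext hab)
    · intro b hb
      simp only [Finset.mem_erase, Finset.mem_filter, Finset.mem_univ, true_and] at hb
      refine ⟨⟨Units.mk0 b hb.1, ?_⟩, Finset.mem_univ _, rfl⟩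
      have h1 := hb.2
      rw [hpow] at h1
      have h2 : b ^ (p ^ n - 1) = 1 := mul_right_cancel₀ hb.1 (h1.trans (one_mul b).symm)
      rw [MonoidHom.mem_ker]
      ext
      simpa using h2
  omega

theorem sum_E [DecidableEq F] (hp2 : p ≠ 2) (n h : ℕ) (hQ : p ^ n = 2 * h + 1) (hh : 0 < h)
    (hc : Fintype.card F = p ^ (4 * n)) (χ : MulChar F ℂ) (hχ4 : χ ^ 4 = 1) (hχ2 : χ ^ 2 ≠ 1) :
    ∑ x ∈ Finset.univ.filter (fun x : F => x ^ p ^ (2 * n) = x), χ x * psiF p F x =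
      p ^ n * (-1) ^ (h + 1) := by
  have hQ2 : p ^ (2 * n) = (2 * h + 1) ^ 2 := by rw [mul_comm, pow_mul, hQ]
  have hQ4 : p ^ (4 * n) = (2 * h + 1) ^ 4 := by rw [mul_comm, pow_mul, hQ]
  have hq1 : Fintype.card F - 1 = 2 * (2 * h * (h + 1) * (4 * h ^ 2 + 4 * h + 2)) := by
    rw [hc, hQ4, Nat.sub_eq_iff_eq_add (Nat.one_le_pow _ _ (by omega))]; ring
  obtain ⟨g, hg⟩ := IsCyclic.exists_monoid_generator (α := Fˣ)
  have hog : orderOf g = 2 * (2 * h * (h + 1) * (4 * h ^ 2 + 4 * h + 2)) := by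
    rw [← hq1, orderOf_eq_card_of_forall_mem_powers hg, Nat.card_eq_fintype_card,
      Fintype.card_units]
  have hw4 : (χ (g : F) ^ 2) ^ 2 = 1 := by
    rw [← pow_mul, ← MulChar.pow_apply_coe, hχ4]; simp
  have hw : χ (g : F) ^ 2 = -1 := by
    rcases sq_eq_one_iff.1 hw4 with h1 | h1
    · exfalso; apply hχ2
      ext a
      obtain ⟨j, hj⟩ := hg a
      have : g ^ j = a := hj
      rw [← this, MulChar.pow_apply_coe, Units.val_pow_eq_pow_val, map_pow, ← pow_mul,
        mul_comm, pow_mul, h1]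
      simp
    · exact h1
  have hgh : (g : F) ^ (2 * h * (h + 1) * (4 * h ^ 2 + 4 * h + 2)) = -1 := by
    have hpos : 0 < 2 * h * (h + 1) * (4 * h ^ 2 + 4 * h + 2) := by positivity
    have h1 : ((g : F) ^ (2 * h * (h + 1) * (4 * h ^ 2 + 4 * h + 2))) ^ 2 = 1 := by
      rw [← pow_mul, mul_comm _ 2, ← hog, ← Units.val_pow_eq_pow_val, pow_orderOf_eq_one,
        Units.val_one]
    rcases sq_eq_one_iff.1 h1 with h2 | h2
    · exfalso
      have h3 : g ^ (2 * h * (h + 1) * (4 * h ^ 2 + 4 * h + 2)) = 1 := by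
        ext; simpa using h2
      have h4 := Nat.le_of_dvd hpos (orderOf_dvd_of_pow_eq_one h3)
      omega
    · exact h2
  set K := Finset.univ.filter (fun t : F => t ^ p ^ n = t) with hK
  set E := Finset.univ.filter (fun x : F => x ^ p ^ (2 * n) = x) with hE
  set S := ∑ x ∈ E, χ x * psiF p F x with hS
  have hKm : ∀ t, t ∈ K ↔ t ^ p ^ n = t := by intro t; simp [hK]
  have hEm : ∀ t, t ∈ E ↔ t ^ p ^ (2 * n) = t := by intro t; simp [hE]
  have hcK : K.card = p ^ n := card_K p n hc
  have h2n : ∀ z : F, z ^ p ^ (2 * n) = (z ^ p ^ n) ^ p ^ n := by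
    intro z; rw [← pow_mul, ← pow_add, two_mul]
  have hKE : ∀ t ∈ K, t ∈ E := by
    intro t ht
    rw [hKm] at ht
    rw [hEm, h2n, ht, ht]
  have hχK : ∀ t ∈ K, t ≠ 0 → χ t = 1 := by
    intro t ht ht0
    rw [hKm] at ht
    refine char_triv χ (M := (2 * h + 2) * (4 * h ^ 2 + 4 * h + 2)) (d := 2 * h) ?_ ?_ ht0 ?_
    · rw [hq1]; ring
    · have : (2 * h + 2) * (4 * h ^ 2 + 4 * h + 2) = 4 * ((h + 1) * (2 * h ^ 2 + 2 * h + 1)) := by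
        ring
      rw [this, pow_mul, hχ4, one_pow]
    · rw [hQ, pow_succ] at ht
      exact mul_right_cancel₀ ht0 (ht.trans (one_mul t).symm)
  -- multiplication by elements of E
  have hmulE : ∀ e ∈ E, e ≠ 0 → ∀ x, e * x ∈ E ↔ x ∈ E := by
    intro e he he0 x
    rw [hEm] at he
    rw [hEm, hEm, mul_pow, he]
    exact ⟨fun h => mul_left_cancel₀ he0 h, fun h => by rw [h]⟩
  have hEχ : ∑ x ∈ E, χ x = 0 := by
    set e : F := (g : F) ^ (4 * h ^ 2 + 4 * h + 2) with he
    have he0 : e ≠ 0 := pow_ne_zero _ g.ne_zero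
    have heE : e ∈ E := by
      have h1 : e ^ (4 * h * (h + 1)) = 1 := by
        rw [he, ← pow_mul, show (4 * h ^ 2 + 4 * h + 2) * (4 * h * (h + 1)) =
          (2 * h * (h + 1) * (4 * h ^ 2 + 4 * h + 2)) * 2 by ring, pow_mul, hgh]
        ring
      rw [hEm, hQ2, show (2 * h + 1) ^ 2 = 4 * h * (h + 1) + 1 by ring, pow_succ, h1, one_mul]
    have hχe : χ e = -1 := by
      rw [he, map_pow, show 4 * h ^ 2 + 4 * h + 2 = 2 * (2 * (h ^ 2 + h) + 1) by ring, pow_mul, hw,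
        pow_succ, pow_mul]
      simp
    have : ∑ x ∈ E, χ x = ∑ x ∈ E, χ e * χ x := by
      symm
      refine Finset.sum_equiv (Equiv.mulLeft₀ e he0) ?_ ?_
      · intro x; simpa using (hmulE e heE he0 x).symm
      · intro x _; simp
    rw [← Finset.mul_sum, hχe] at this
    linear_combination (1 / 2 : ℂ) * this
  have hD1 : ∑ t ∈ K, ∑ x ∈ E, χ x * psiF p F (t * x) = ((p : ℂ) ^ n - 1) * S := by
    have h0K : (0 : F) ∈ K := by
      rw [hKm]; exact zero_pow (pow_pos (Fact.out : p.Prime).pos n).ne'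
    rw [← Finset.sum_erase_add _ _ h0K]
    have h0 : ∑ x ∈ E, χ x * psiF p F (0 * x) = 0 := by
      simpa using hEχ
    have h1 : ∀ t ∈ K.erase 0, ∑ x ∈ E, χ x * psiF p F (t * x) = S := by
      intro t ht
      rw [Finset.mem_erase] at ht
      refine Finset.sum_equiv (Equiv.mulLeft₀ t ht.1) ?_ ?_
      · intro x; simpa using (hmulE t (hKE t ht.2) ht.1 x).symm
      · intro x _; simp [hχK t ht.2 ht.1]
    rw [h0, add_zero, Finset.sum_congr rfl h1, Finset.sum_const, Finset.card_erase_of_mem h0K, hcK,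
      nsmul_eq_mul, Nat.cast_sub (Nat.one_le_pow _ _ (Fact.out : p.Prime).pos)]
    push_cast; ring
  set x0 : F := (g : F) ^ ((h + 1) * (4 * h ^ 2 + 4 * h + 2)) with hx0
  have hx00 : x0 ≠ 0 := pow_ne_zero _ g.ne_zero
  have hx0Q : x0 ^ p ^ n = -x0 := by
    rw [hQ, pow_succ, hx0, ← pow_mul, show (h + 1) * (4 * h ^ 2 + 4 * h + 2) * (2 * h) =
      2 * h * (h + 1) * (4 * h ^ 2 + 4 * h + 2) by ring, hgh]
    ring
  have hχx0 : χ x0 = (-1) ^ (h + 1) := by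
    rw [hx0, map_pow, show (h + 1) * (4 * h ^ 2 + 4 * h + 2) =
      2 * (2 * (h ^ 2 + h) + 1) * (h + 1) by ring, pow_mul, pow_mul, hw,
      Odd.neg_one_pow ⟨_, rfl⟩]
  have hodd : Odd (p ^ n) := ⟨h, hQ⟩
  have hZ : ∑ x ∈ E, (if x ^ p ^ n = -x then χ x else 0) = ((p : ℂ) ^ n - 1) * (-1) ^ (h + 1) := by
    rw [← Finset.sum_filter]
    have : ∑ t ∈ K, χ (x0 * t) = ∑ x ∈ E with x ^ p ^ n = -x, χ x := by
      refine Finset.sum_equiv (Equiv.mulLeft₀ x0 hx00) ?_ ?_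
      · intro t
        rw [hKm, Finset.mem_filter, hEm, Equiv.mulLeft₀_apply]
        constructor
        · intro ht
          have : (x0 * t) ^ p ^ n = -(x0 * t) := by rw [mul_pow, hx0Q, ht]; ring
          refine ⟨?_, this⟩
          rw [h2n, this, hodd.neg_pow, this, neg_neg]
        · rintro ⟨_, h2⟩
          rw [mul_pow, hx0Q] at h2
          apply mul_left_cancel₀ hx00
          linear_combination -h2
      · intro t _; simp
    rw [← this]
    have h0K : (0 : F) ∈ K := by
      rw [hKm]; exact zero_pow (pow_pos (Fact.out : p.Prime).pos n).ne'
    rw [← Finset.sum_erase_add _ _ h0K, mul_zero, MulChar.map_zero, add_zero]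
    have h1 : ∀ t ∈ K.erase 0, χ (x0 * t) = (-1) ^ (h + 1) := by
      intro t ht
      rw [Finset.mem_erase] at ht
      rw [map_mul, hχK t ht.2 ht.1, hχx0, mul_one]
    rw [Finset.sum_congr rfl h1, Finset.sum_const, Finset.card_erase_of_mem h0K, hcK,
      nsmul_eq_mul, Nat.cast_sub (Nat.one_le_pow _ _ (Fact.out : p.Prime).pos)]
    push_cast; ring
  have hD2 : ∑ t ∈ K, ∑ x ∈ E, χ x * psiF p F (t * x) =
      (p : ℂ) ^ n * (((p : ℂ) ^ n - 1) * (-1) ^ (h + 1)) := by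
    rw [Finset.sum_comm, ← hZ, Finset.mul_sum]
    refine Finset.sum_congr rfl fun x hx => ?_
    rw [← Finset.mul_sum, psi_K_sum p hp2 n hc x ((hEm x).1 hx)]
    split_ifs
    · rw [← hK, hcK]; push_cast; ring
    · simp
  have hne : (p : ℂ) ^ n - 1 ≠ 0 := by
    have : ((p ^ n : ℕ) : ℂ) = ((2 * h + 1 : ℕ) : ℂ) := by rw [hQ]
    push_cast at this
    rw [this, add_sub_cancel_right]
    exact mul_ne_zero two_ne_zero (by exact_mod_cast hh.ne')
  apply mul_left_cancel₀ hne
  rw [← hD1, hD2]; ring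

theorem gauss_four (hp4 : p % 4 = 3) (n : ℕ) (hn : 0 < n)
    (hc : Fintype.card F = p ^ (4 * n)) (χ : MulChar F ℂ) (hχ4 : χ ^ 4 = 1) (hχ2 : χ ^ 2 ≠ 1)
    (hneg : χ (-1) = 1) :
    gaussSum χ (psiF p F) = - p ^ (2 * n) := by
  classical
  have hp : p.Prime := Fact.out
  have hp2 : p ≠ 2 := by rintro rfl; omega
  have hodd : Odd (p ^ n) := (Nat.odd_iff.2 (by omega : p % 2 = 1)).pow
  obtain ⟨h, hQ⟩ := hodd
  have hh : 0 < h := by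
    have : 1 < p ^ n := Nat.one_lt_pow hn.ne' hp.one_lt
    omega
  have hinv3 : χ⁻¹ = χ ^ 3 := by
    rw [inv_eq_iff_mul_eq_one, ← pow_succ', hχ4]
  have hpinv : χ ^ p = χ⁻¹ := by
    rw [hinv3]
    conv_lhs => rw [← Nat.div_add_mod p 4, hp4, pow_add, pow_mul, hχ4, one_pow, one_mul]
  have hχ1 : χ ≠ 1 := fun h => hχ2 (by rw [h, one_pow])
  have hE := sum_E p hp2 n h hQ hh hc χ hχ4 hχ2
  set E := Finset.univ.filter (fun x : F => x ^ p ^ (2 * n) = x) with hEdef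
  have hEm : ∀ t, t ∈ E ↔ t ^ p ^ (2 * n) = t := by intro t; simp [hEdef]
  have hGinv : gaussSum χ⁻¹ (psiF p F) = gaussSum χ (psiF p F) := by
    rw [← hpinv]; simpa using gauss_frob p χ 1
  set u : F → ℂ := fun x => (χ x + χ⁻¹ x) / 2 * psiF p F x with hu
  have hGu : gaussSum χ (psiF p F) = ∑ x, u x := by
    have : ∑ x, u x = (gaussSum χ (psiF p F) + gaussSum χ⁻¹ (psiF p F)) / 2 := by
      unfold gaussSum
      rw [← Finset.sum_add_distrib, Finset.sum_div]
      refine Finset.sum_congr rfl fun x _ => ?_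
      simp only [hu]; ring
    rw [this, hGinv]; ring
  have hval : ∀ x, IsIntegral ℤ ((χ x + χ⁻¹ x) / 2) := by
    intro x
    by_cases hx : x = 0
    · subst hx
      rw [MulChar.map_zero, MulChar.map_zero]; simpa using isIntegral_zero
    · have h4 : (χ x ^ 2) ^ 2 = 1 := by
        rw [← pow_mul, ← MulChar.pow_apply' _ (by norm_num), hχ4,
          MulChar.one_apply (isUnit_iff_ne_zero.2 hx)]
      rw [hinv3, MulChar.pow_apply' _ (by norm_num)]
      rcases sq_eq_one_iff.1 h4 with h1 | h1
      · have : (χ x + χ x ^ 3) / 2 = χ x := by linear_combination (χ x / 2) * h1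
        rw [this]
        exact isIntegral_of_pow_one (n := 2) (by norm_num) h1
      · have : (χ x + χ x ^ 3) / 2 = 0 := by linear_combination (χ x / 2) * h1
        rw [this]; exact isIntegral_zero
  have hpn : ∀ m : ℕ, (χ ^ p ^ m = χ ∧ χ⁻¹ ^ p ^ m = χ⁻¹) ∨ (χ ^ p ^ m = χ⁻¹ ∧ χ⁻¹ ^ p ^ m = χ) := by
    intro m
    induction m with
    | zero => left; simp
    | succ m ih =>
      rw [pow_succ, pow_mul, pow_mul]
      rcases ih with ⟨h1, h2⟩ | ⟨h1, h2⟩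
      · right; rw [h1, h2, inv_pow, hpinv, inv_inv]; exact ⟨rfl, rfl⟩
      · left; rw [h1, h2, inv_pow, hpinv, inv_inv]; exact ⟨rfl, rfl⟩
  have huσ : ∀ x, u (x ^ p ^ n) = u x := by
    intro x
    have hpn0 : p ^ n ≠ 0 := pow_ne_zero _ hp.ne_zero
    simp only [hu]
    rw [psiF_frob, map_pow, map_pow, ← MulChar.pow_apply' _ hpn0, ← MulChar.pow_apply' _ hpn0]
    rcases hpn n with ⟨h1, h2⟩ | ⟨h1, h2⟩
    · rw [h1, h2]
    · rw [h1, h2, add_comm]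
  have hpp : ∀ z : F, ∀ a b : ℕ, (z ^ p ^ a) ^ p ^ b = z ^ p ^ (a + b) := by
    intro z a b; rw [← pow_mul, ← pow_add]
  have hz4 : ∀ z : F, z ^ p ^ (4 * n) = z := by
    intro z; rw [← hc, FiniteField.pow_card]
  obtain ⟨r, hr, hr4⟩ := orbit_sum (fun x : F => x ^ p ^ n) u Eᶜ
    (by
      intro x hx
      rw [Finset.mem_compl, hEm] at hx ⊢
      intro h1
      apply hx
      have h2 := congrArg (fun z : F => z ^ p ^ (3 * n)) h1
      simp only [hpp] at h2
      rw [show n + 2 * n + 3 * n = 2 * n + 4 * n by ring, show n + 3 * n = 4 * n by ring, hz4,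
        ← hpp, hz4] at h2
      exact h2)
    (by
      intro x _
      simp only [hpp]
      rw [show n + n + n + n = 4 * n by ring, hz4])
    (by
      intro x hx
      rw [Finset.mem_compl, hEm] at hx
      simp only [hpp]
      rw [← two_mul]; exact hx)
    (fun x _ => huσ x) (fun x _ => (hval x).mul (psiF_integral p x))
  have hEu : ∑ x ∈ E, u x = p ^ n * (-1) ^ (h + 1) := by
    rw [← hE]
    refine Finset.sum_congr rfl fun x hx => ?_
    simp only [hu]
    congr 1
    by_cases hx0 : x = 0
    · subst hx0
      rw [MulChar.map_zero, MulChar.map_zero]; simp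
    · have h1 : (χ ^ 2) x = 1 := by
        refine char_triv (χ ^ 2) (M := 4 * h ^ 2 + 4 * h + 2) (d := 4 * h ^ 2 + 4 * h) ?_ ?_ hx0 ?_
        · have hQ4 : p ^ (4 * n) = (2 * h + 1) ^ 4 := by rw [mul_comm, pow_mul, hQ]
          symm
          rw [hc, hQ4, Nat.sub_eq_iff_eq_add (Nat.one_le_pow _ _ (by omega))]; ring
        · rw [← pow_mul, show 2 * (4 * h ^ 2 + 4 * h + 2) = 4 * (2 * h ^ 2 + 2 * h + 1) by ring,
            pow_mul, hχ4, one_pow]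
        · have hQ2 : p ^ (2 * n) = (2 * h + 1) ^ 2 := by rw [mul_comm, pow_mul, hQ]
          rw [hEm, hQ2, show (2 * h + 1) ^ 2 = 4 * h ^ 2 + 4 * h + 1 by ring, pow_succ] at hx
          exact mul_right_cancel₀ hx0 (hx.trans (one_mul x).symm)
      rw [MulChar.pow_apply' _ (by norm_num)] at h1
      rw [hinv3, MulChar.pow_apply' _ (by norm_num)]
      linear_combination (χ x / 2) * h1
  have htot : gaussSum χ (psiF p F) = p ^ n * (-1) ^ (h + 1) + 4 * r := by
    rw [hGu, ← Finset.sum_add_sum_compl E, hEu, hr4]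
  rcases gauss_pure p χ hχ1 hneg 1 (by simpa using hpinv) (m := 2 * n)
    (by rw [hc]; congr 1; ring) with h1 | h1
  · exfalso
    rw [h1] at htot
    have h2 : (((p : ℤ) ^ (2 * n) - p ^ n * (-1) ^ (h + 1) : ℤ) : ℂ) = ((4 : ℤ) : ℂ) * r := by
      push_cast; linear_combination htot
    have h3 := int_dvd_of_integral _ _ r hr h2 (by norm_num)
    have hQz : (p : ℤ) ^ n = 2 * h + 1 := by exact_mod_cast hQ
    rw [mul_comm 2 n, pow_mul, hQz] at h3
    rcases Nat.even_or_odd' h with ⟨k, rfl | rfl⟩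
    · have : (-1 : ℤ) ^ (2 * k + 1) = -1 := Odd.neg_one_pow ⟨k, rfl⟩
      rw [this] at h3
      push_cast at h3
      obtain ⟨c, hc'⟩ := h3
      have : (2 * (2 * (k : ℤ)) + 1) ^ 2 = 4 * (4 * (k : ℤ) ^ 2 + 2 * k) + 1 := by ring
      rw [this] at hc'
      omega
    · have : (-1 : ℤ) ^ (2 * k + 1 + 1) = 1 := Even.neg_one_pow ⟨k + 1, by ring⟩
      rw [this] at h3
      push_cast at h3
      obtain ⟨c, hc'⟩ := h3
      have : (2 * (2 * (k : ℤ) + 1) + 1) ^ 2 = 4 * (4 * (k : ℤ) ^ 2 + 6 * k + 2) + 1 := by ring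
      rw [this] at hc'
      omega
  · exact h1

end Part2


section Part3

theorem rat_of_const {N : ℕ} [NeZero N] {ζ : ℂ} (hζ : IsPrimitiveRoot ζ N) (u : (ZMod N)ˣ → ℂ)
    (hu : u ∈ Algebra.adjoin ℚ {fun k : (ZMod N)ˣ => ζ ^ (k : ZMod N).val})
    (c : ℂ) (hc : ∀ k, u k = c) : ∃ r : ℚ, c = r := by
  rw [Algebra.adjoin_singleton_eq_range_aeval] at hu
  obtain ⟨P, hP⟩ := hu
  have hP' : (aeval fun k : (ZMod N)ˣ => ζ ^ (k : ZMod N).val) P = u := hP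
  have hval : ∀ k : (ZMod N)ˣ, aeval (ζ ^ (k : ZMod N).val) P = c := by
    intro k
    rw [← hc k, ← hP']
    have := Polynomial.aeval_algHom_apply (Pi.evalAlgHom ℚ (fun _ : (ZMod N)ˣ => ℂ) k)
      (fun k : (ZMod N)ˣ => ζ ^ (k : ZMod N).val) P
    exact this
  have hval2 : ∀ x ∈ primitiveRoots N ℂ, aeval x P = c := by
    intro x hx
    rw [mem_primitiveRoots (NeZero.pos N)] at hx
    obtain ⟨i, hi, hco, rfl⟩ := (hζ.isPrimitiveRoot_iff).1 hx
    have := hval (ZMod.unitOfCoprime i hco)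
    rwa [ZMod.coe_unitOfCoprime, ZMod.val_natCast_of_lt hi] at this
  set R := P %ₘ cyclotomic N ℚ with hR
  have hdeg : R.degree < (Nat.totient N : ℕ) := by
    have := Polynomial.degree_modByMonic_lt P (cyclotomic.monic N ℚ)
    rwa [degree_cyclotomic] at this
  have hz : R.map (algebraMap ℚ ℂ) - C c = 0 := by
    apply Polynomial.eq_zero_of_degree_lt_of_eval_finset_eq_zero (primitiveRoots N ℂ)
    · rw [hζ.card_primitiveRoots]
      refine lt_of_le_of_lt (degree_sub_le _ _) (max_lt ?_ ?_)
      · rwa [degree_map]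
      · refine lt_of_le_of_lt degree_C_le ?_
        exact_mod_cast Nat.totient_pos.2 (NeZero.pos N)
    · intro x hx
      have h1 := hval2 x hx
      have h2 : aeval x (cyclotomic N ℚ) = 0 := by
        have : (cyclotomic N ℂ).IsRoot x :=
          (isRoot_cyclotomic_iff).2 ((mem_primitiveRoots (NeZero.pos N)).1 hx)
        rw [aeval_def, eval₂_eq_eval_map, map_cyclotomic]; exact this
      have h3 : aeval x R = c := by
        rw [hR, aeval_modByMonic_eq_self_of_root h2, h1]
      rw [eval_sub, eval_C, eval_map, ← aeval_def, h3, sub_self]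
  refine ⟨R.coeff 0, ?_⟩
  have := congrArg (fun q => q.coeff 0) hz
  simp only [coeff_sub, coeff_map, coeff_C_zero, coeff_zero] at this
  rw [sub_eq_zero] at this
  exact this.symm

theorem int_of_rat_integral {c : ℂ} (h : ∃ r : ℚ, c = r) (hi : IsIntegral ℤ c) :
    ∃ m : ℤ, c = m := by
  obtain ⟨r, rfl⟩ := h
  have h2 : IsIntegral ℤ r :=
    (isIntegral_algHom_iff (Rat.castHom ℂ).toIntAlgHom (Rat.castHom ℂ).injective).1 hi
  obtain ⟨y, hy⟩ := IsIntegrallyClosed.isIntegral_iff.1 h2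
  refine ⟨y, ?_⟩
  rw [← hy]; simp

theorem const_of_gen {N : ℕ} (P : (ZMod N)ˣ) (hgen : ∀ k : (ZMod N)ˣ, ∃ j : ℕ, k = P ^ j ∨ k = -P ^ j)
    (u : (ZMod N)ˣ → ℂ) (h1 : ∀ k, u (P * k) = u k) (h2 : ∀ k, u (-k) = u k) (k : (ZMod N)ˣ) :
    u k = u 1 := by
  have h3 : ∀ j : ℕ, u (P ^ j) = u 1 := by
    intro j
    induction j with
    | zero => simp
    | succ j ih => rw [pow_succ', h1, ih]
  obtain ⟨j, rfl | rfl⟩ := hgen k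
  · exact h3 j
  · rw [h2, h3]

theorem pow_val_eq {G : Type*} [Monoid G] {N : ℕ} [NeZero N] (x : G) (hx : x ^ N = 1) (a : ZMod N)
    (m : ℕ) (hm : (m : ZMod N) = a) : x ^ a.val = x ^ m := by
  subst hm
  rw [ZMod.val_natCast, ← pow_mod_orderOf, Nat.mod_mod_of_dvd _ (orderOf_dvd_of_pow_eq_one hx),
    pow_mod_orderOf]

variable (p : ℕ) [Fact p.Prime] {F : Type} [Field F] [Fintype F] [Algebra (ZMod p) F]

theorem gauss_mem {N : ℕ} [NeZero N] (hN1 : 1 < N) {ζ : ℂ} (hζ : IsPrimitiveRoot ζ N) (χ : MulChar F ℂ)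
    (hχ : orderOf χ = N) (htriv : ∀ t : ZMod p, t ≠ 0 → χ (algebraMap (ZMod p) F t) = 1) :
    (fun k : (ZMod N)ˣ => gaussSum (χ ^ (k : ZMod N).val) (psiF p F)) ∈
      Algebra.adjoin ℚ {fun k : (ZMod N)ˣ => ζ ^ (k : ZMod N).val} := by
  classical
  have : Fact (1 < N) := ⟨hN1⟩
  have hp : p.Prime := Fact.out
  have hk0 : ∀ k : (ZMod N)ˣ, (k : ZMod N).val ≠ 0 := by
    intro k h
    rw [ZMod.val_eq_zero] at h
    exact k.ne_zero h
  have hp1 : ((p : ℂ) - 1) ≠ 0 := by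
    rw [sub_ne_zero]; exact_mod_cast hp.one_lt.ne'
  have heq : (fun k : (ZMod N)ˣ => gaussSum (χ ^ (k : ZMod N).val) (psiF p F)) =
      ((p : ℚ) / (p - 1)) • ∑ x : F, if Algebra.trace (ZMod p) F x = 0 then
        (fun k : (ZMod N)ˣ => χ x ^ (k : ZMod N).val) else 0 := by
    funext k
    have h1 : χ ^ (k : ZMod N).val ≠ 1 := by
      intro h
      have := orderOf_dvd_of_pow_eq_one h
      rw [hχ] at this
      have h3 := Nat.le_of_dvd (Nat.pos_of_ne_zero (hk0 k)) this
      have h4 := ZMod.val_lt (k : ZMod N)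
      omega
    have h2 := gauss_trace0 p (χ ^ (k : ZMod N).val) h1 (by
      intro t ht
      rw [MulChar.pow_apply' _ (hk0 k), htriv t ht, one_pow])
    rw [Pi.smul_apply, Finset.sum_apply, Rat.smul_def]
    have h3 : ∀ x : F, (if Algebra.trace (ZMod p) F x = 0 then
        (fun k : (ZMod N)ˣ => χ x ^ (k : ZMod N).val) else 0) k =
        if Algebra.trace (ZMod p) F x = 0 then (χ ^ (k : ZMod N).val) x else 0 := by
      intro x
      split_ifs
      · rw [MulChar.pow_apply' _ (hk0 k)]
      · rfl
    rw [Finset.sum_congr rfl fun x _ => h3 x]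
    push_cast
    rw [div_mul_eq_mul_div, ← h2]
    field_simp
  rw [heq]
  apply Subalgebra.smul_mem
  apply Subalgebra.sum_mem
  intro x _
  split_ifs
  · by_cases hx : x = 0
    · subst hx
      have : (fun k : (ZMod N)ˣ => χ (0 : F) ^ (k : ZMod N).val) = 0 := by
        funext k; simp only [MulChar.map_zero, Pi.zero_apply]; exact zero_pow (hk0 k)
      rw [this]; exact Subalgebra.zero_mem _
    · have h1 : χ x ^ N = 1 := by
        rw [← MulChar.pow_apply' _ (NeZero.ne N), ← hχ, pow_orderOf_eq_one,
          MulChar.one_apply (isUnit_iff_ne_zero.2 hx)]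
      obtain ⟨i, _, hi⟩ := hζ.eq_pow_of_pow_eq_one h1
      have : (fun k : (ZMod N)ˣ => χ x ^ (k : ZMod N).val) =
          (fun k : (ZMod N)ˣ => ζ ^ (k : ZMod N).val) ^ i := by
        funext k
        rw [← hi, Pi.pow_apply, ← pow_mul, ← pow_mul, mul_comm]
      rw [this]
      have hb : (fun k : (ZMod N)ˣ => ζ ^ (k : ZMod N).val) ∈
        Algebra.adjoin ℚ {fun k : (ZMod N)ˣ => ζ ^ (k : ZMod N).val} :=
        Algebra.subset_adjoin (Set.mem_singleton _)
      exact Subalgebra.pow_mem _ hb _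
  · exact Subalgebra.zero_mem _

end Part3

section Part4

theorem nonres {p l r : ℕ} [Fact l.Prime] (hl4 : l % 4 = 1) (hr : 1 ≤ r)
    (hpl : (p : ZMod l) ≠ 0)
    (hord : orderOf (p : ZMod (l ^ r)) = Nat.totient (l ^ r)) :
    quadraticChar (ZMod l) (p : ZMod l) = -1 := by
  have hl : l.Prime := Fact.out
  rcases quadraticChar_dichotomy hpl with h | h
  · exfalso
    rw [quadraticChar_one_iff_isSquare hpl, ZMod.euler_criterion l hpl] at h
    have h1 : (l : ℤ) ∣ (p : ℤ) ^ (l / 2) - 1 := by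
      rw [← ZMod.intCast_zmod_eq_zero_iff_dvd]; push_cast; rw [h, sub_self]
    have h2 := dvd_sub_pow_of_dvd_sub h1 (r - 1)
    rw [Nat.sub_add_cancel hr, one_pow, ← pow_mul] at h2
    have h3 : (p : ZMod (l ^ r)) ^ (l / 2 * l ^ (r - 1)) = 1 := by
      have : (((p : ℤ) ^ (l / 2 * l ^ (r - 1)) - 1 : ℤ) : ZMod (l ^ r)) = 0 := by
        rw [ZMod.intCast_zmod_eq_zero_iff_dvd]; exact_mod_cast h2
      push_cast at this
      exact sub_eq_zero.1 this
    have h4 := orderOf_dvd_of_pow_eq_one h3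
    rw [hord, Nat.totient_prime_pow hl hr, mul_comm] at h4
    have h5 := Nat.dvd_of_mul_dvd_mul_right (pow_pos hl.pos _) h4
    have h6 := Nat.le_of_dvd (by have := hl.two_le; omega) h5
    have := hl.two_le
    omega
  · exact h

/-- the arithmetic of the tau function -/
theorem tau_exists {p l r N : ℕ} [NeZero N] [Fact l.Prime] (hl4 : l % 4 = 1) (hr : 1 ≤ r)
    (hN : N = 4 * l ^ r) (hp4 : p % 4 = 3)
    (hq : quadraticChar (ZMod l) (p : ZMod l) = -1) {ζ : ℂ} (hζ : IsPrimitiveRoot ζ N)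
    (P : (ZMod N)ˣ) (hP : (P : ZMod N) = p) :
    ∃ τ : (ZMod N)ˣ → ℂ, τ ∈ Algebra.adjoin ℚ {fun k : (ZMod N)ˣ => ζ ^ (k : ZMod N).val} ∧
      (∀ k, τ (P * k) = τ k) ∧ (∀ k, τ (-k) = - τ k) ∧ τ 1 ^ 2 = - l := by
  have hl : l.Prime := Fact.out
  have hlN : l ∣ N := by rw [hN]; exact Dvd.dvd.mul_left (dvd_pow_self l (by omega)) 4
  have hN1 : 1 < N := by
    have := Nat.pos_of_ne_zero (NeZero.ne N); have := Nat.le_of_dvd this hlN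
    have := hl.two_le; omega
  set I : ℂ := ζ ^ (l ^ r) with hI
  set ω : ℂ := ζ ^ (4 * l ^ (r - 1)) with hω
  have hI4 : IsPrimitiveRoot I 4 := hζ.pow (NeZero.pos N) (by rw [hN, mul_comm])
  have hωl : IsPrimitiveRoot ω l := hζ.pow (NeZero.pos N) (by
    rw [hN, mul_assoc, ← pow_succ, Nat.sub_add_cancel hr])
  have hI2 : I ^ 2 = -1 := by
    have h1 : IsPrimitiveRoot (I ^ 2) 2 := hI4.pow (by norm_num) (by norm_num)
    exact h1.eq_neg_one_of_two_right
  have hl2 : ringChar (ZMod l) ≠ 2 := by rw [ZMod.ringChar_zmod_n]; omega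
  set e : AddChar (ZMod l) ℂ := AddChar.zmodChar l hωl.pow_eq_one with he
  have hep : e.IsPrimitive := AddChar.zmodChar_primitive_of_primitive_root l hωl
  set η : MulChar (ZMod l) ℂ := (quadraticChar (ZMod l)).ringHomComp (Int.castRingHom ℂ) with hη
  have hηq : η.IsQuadratic := (quadraticChar_isQuadratic (ZMod l)).comp _
  have hη1 : η ≠ 1 := by
    intro h
    apply quadraticChar_ne_one hl2
    exact (MulChar.ringHomComp_eq_one_iff (Int.cast_injective (α := ℂ))).1 h
  have hηp : η (p : ZMod l) = -1 := by
    rw [hη, MulChar.ringHomComp_apply, hq]; simp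
  have hηn : η (-1) = 1 := by
    rw [hη, MulChar.ringHomComp_apply, quadraticChar_neg_one hl2, ZMod.card,
      ZMod.χ₄_nat_one_mod_four hl4]; simp
  set g := gaussSum η e with hg
  have hg2 : g ^ 2 = l := by
    rw [hg, gaussSum_sq hη1 hηq hep, hηn, ZMod.card, one_mul]
  set cst := ZMod.castHom hlN (ZMod l) with hcst
  have hcv : ∀ k : ZMod N, cst k = ((k.val : ℕ) : ZMod l) := by
    intro k; rw [hcst, ZMod.castHom_apply, ZMod.cast_eq_val]
  have hodd : ∀ k : (ZMod N)ˣ, Odd (k : ZMod N).val := by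
    intro k
    have := ZMod.val_coe_unit_coprime k
    have h2 : (2 : ℕ) ∣ N := by rw [hN]; exact ⟨2 * l ^ r, by ring⟩
    exact Nat.coprime_two_right.1 (Nat.Coprime.coprime_dvd_right h2 this)
  have hIk : ∀ k : (ZMod N)ˣ, (I ^ (k : ZMod N).val) ^ 2 = -1 := by
    intro k
    rw [← pow_mul, mul_comm, pow_mul, hI2, (hodd k).neg_one_pow]
  have hIN : I ^ N = 1 := by rw [hN, pow_mul, hI4.pow_eq_one, one_pow]
  refine ⟨fun k => I ^ (k : ZMod N).val * (η (cst k) * g), ?_, ?_, ?_, ?_⟩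
  · have h1 : (fun k : (ZMod N)ˣ => I ^ (k : ZMod N).val * (η (cst k) * g)) =
        (fun k : (ZMod N)ˣ => ζ ^ (k : ZMod N).val) ^ (l ^ r) *
        ∑ x : ZMod l, algebraMap ℚ _ (quadraticChar (ZMod l) x : ℚ) *
          (fun k : (ZMod N)ˣ => ζ ^ (k : ZMod N).val) ^ (4 * l ^ (r - 1) * x.val) := by
      funext k
      rw [Pi.mul_apply, Pi.pow_apply, Finset.sum_apply, hI, ← pow_mul, ← pow_mul, mul_comm (l ^ r)]
      congr 1
      have hu : IsUnit (cst k) := k.isUnit.map cst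
      have h2 := gaussSum_mulShift η e hu.unit
      rw [IsUnit.unit_spec] at h2
      have h3 : η (cst k) * η (cst k) = 1 := by
        have := hηq.sq_eq_one
        rw [← MulChar.mul_apply, ← sq, this, MulChar.one_apply hu]
      rw [hg, ← h2, ← mul_assoc, h3, one_mul, gaussSum]
      refine Finset.sum_congr rfl fun x _ => ?_
      rw [Pi.mul_apply, Pi.pow_apply, Pi.algebraMap_apply, AddChar.mulShift_apply, hη,
        MulChar.ringHomComp_apply]
      have h5 : e (cst k * x) = (ζ ^ (k : ZMod N).val) ^ (4 * l ^ (r - 1) * x.val) := by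
        rw [hcv]
        have : ((k : ZMod N).val : ZMod l) * x = (((k : ZMod N).val * x.val : ℕ) : ZMod l) := by
          rw [Nat.cast_mul, ZMod.natCast_zmod_val]
        rw [this, he, AddChar.zmodChar_apply', hω, ← pow_mul, ← pow_mul]
        congr 1
        ring
      rw [h5]
      simp
    rw [h1]
    have hb : (fun k : (ZMod N)ˣ => ζ ^ (k : ZMod N).val) ∈
      Algebra.adjoin ℚ {fun k : (ZMod N)ˣ => ζ ^ (k : ZMod N).val} := Algebra.subset_adjoin rfl
    refine Subalgebra.mul_mem _ (Subalgebra.pow_mem _ hb _) (Subalgebra.sum_mem _ fun x _ => ?_)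
    exact Subalgebra.mul_mem _ (Subalgebra.algebraMap_mem _ _) (Subalgebra.pow_mem _ hb _)
  · intro k
    have h1 : I ^ ((P * k : (ZMod N)ˣ) : ZMod N).val = - I ^ (k : ZMod N).val := by
      rw [pow_val_eq I hIN _ ((k : ZMod N).val * p) (by push_cast; rw [hP]; simp [mul_comm]),
        pow_mul, ← Nat.div_add_mod p 4, hp4]
      have h2 := hIk k
      set y := I ^ (k : ZMod N).val
      have h4 : y ^ 4 = 1 := by linear_combination (y ^ 2 - 1) * h2
      rw [pow_add, pow_mul, h4, one_pow]
      linear_combination y * h2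
    have h2 : η (cst ((P * k : (ZMod N)ˣ) : ZMod N)) = - η (cst k) := by
      rw [Units.val_mul, map_mul, map_mul, hP, map_natCast, hηp]; ring
    simp only [h1, h2]; ring
  · intro k
    have h1 : I ^ ((-k : (ZMod N)ˣ) : ZMod N).val = - I ^ (k : ZMod N).val := by
      have h3 : I ^ ((-k : (ZMod N)ˣ) : ZMod N).val * I ^ (k : ZMod N).val = 1 := by
        rw [← pow_add, ← pow_val_eq I hIN (0 : ZMod N), ZMod.val_zero, pow_zero]
        push_cast; simp
      linear_combination (I ^ ((-k : (ZMod N)ˣ) : ZMod N).val) * hIk k - (I ^ (k : ZMod N).val) * h3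
    have h2 : η (cst ((-k : (ZMod N)ˣ) : ZMod N)) = η (cst k) := by
      rw [Units.val_neg, map_neg, neg_eq_neg_one_mul, map_mul, hηn, one_mul]
    simp only [h1, h2]; ring
  · have : Fact (1 < N) := ⟨hN1⟩
    simp only [Units.val_one, ZMod.val_one, map_one, pow_one, one_mul]
    rw [mul_pow, hI2, hg2]; ring

end Part4

section Part5

theorem arith1 {p l r N n : ℕ} (hl : l.Prime) (hp1 : 1 < p)
    (hN : N = 4 * l ^ r) (hl2 : l ≠ 2) (hp4 : p % 4 = 3)
    (hpl1 : (p : ZMod l) ≠ 1)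
    (hpow : (p : ZMod (l ^ r)) ^ (4 * n) = 1) :
    ∃ M, N ∣ M ∧ M * (p - 1) = p ^ (4 * n) - 1 := by
  have hd : p - 1 ∣ p ^ (4 * n) - 1 := by
    simpa using Nat.sub_dvd_pow_sub_pow p 1 (4 * n)
  obtain ⟨M, hM⟩ := hd
  refine ⟨M, ?_, by rw [hM, mul_comm]⟩
  have h1 : 1 ≤ p ^ (4 * n) := Nat.one_le_pow _ _ (by omega)
  have hc4 : Nat.Coprime 4 (l ^ r) := by
    apply Nat.Coprime.pow_right
    rw [show 4 = 2 ^ 2 by norm_num]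
    apply Nat.Coprime.pow_left
    exact (Nat.coprime_primes Nat.prime_two hl).2 (Ne.symm hl2)
  rw [hN]
  apply hc4.mul_dvd_of_dvd_of_dvd
  · have h8 : 8 ∣ p ^ (4 * n) - 1 := by
      have h2 : p ^ 4 ≡ 1 [MOD 8] := by
        have h3 : p % 8 = 3 ∨ p % 8 = 7 := by omega
        rcases h3 with h3 | h3 <;>
          simp [Nat.ModEq, Nat.pow_mod, h3]
      have h4 := h2.pow n
      rw [one_pow, ← pow_mul] at h4
      exact (Nat.modEq_iff_dvd' h1).1 h4.symm
    rw [hM] at h8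
    obtain ⟨u, hu⟩ : ∃ u, p - 1 = 2 * (2 * u + 1) := ⟨(p - 3) / 4, by omega⟩
    rw [hu] at h8
    have h5 : 4 ∣ (2 * u + 1) * M := by
      obtain ⟨c, hc⟩ := h8
      exact ⟨c, by linarith⟩
    have h6 : Nat.Coprime 4 (2 * u + 1) := by
      rw [show 4 = 2 ^ 2 by norm_num]
      apply Nat.Coprime.pow_left
      rw [Nat.coprime_two_left]; exact ⟨u, rfl⟩
    exact h6.dvd_of_dvd_mul_left h5
  · have h2 : l ^ r ∣ p ^ (4 * n) - 1 := by
      rw [← ZMod.natCast_eq_zero_iff, Nat.cast_sub h1]; push_cast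
      rw [hpow, sub_self]
    rw [hM] at h2
    have h3 : Nat.Coprime (l ^ r) (p - 1) := by
      apply Nat.Coprime.pow_left
      rw [hl.coprime_iff_not_dvd]
      intro h
      apply hpl1
      rw [← ZMod.natCast_eq_zero_iff, Nat.cast_sub hp1.le] at h
      push_cast at h
      exact sub_eq_zero.1 h
    exact h3.dvd_of_dvd_mul_left h2

theorem arith2 {p l r N n : ℕ} (hl : l.Prime) (hp1 : 1 < p) (hn : 0 < n)
    (hN : N = 4 * l ^ r) (hl2 : l ≠ 2) (hp4 : p % 4 = 3)
    (hord : orderOf (p : ZMod (l ^ r)) = 4 * n) :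
    N ∣ 2 * (p ^ (2 * n) + 1) := by
  have hodd : Odd p := by rw [Nat.odd_iff]; omega
  have h2 : 2 ∣ p ^ (2 * n) + 1 := (hodd.pow.add_odd odd_one).two_dvd
  have hc4 : Nat.Coprime 4 (l ^ r) := by
    apply Nat.Coprime.pow_right
    rw [show 4 = 2 ^ 2 by norm_num]
    apply Nat.Coprime.pow_left
    exact (Nat.coprime_primes Nat.prime_two hl).2 (Ne.symm hl2)
  rw [hN]
  apply hc4.mul_dvd_of_dvd_of_dvd
  · obtain ⟨c, hc⟩ := h2
    exact ⟨c, by rw [hc]; ring⟩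
  · apply Dvd.dvd.mul_left
    have h1 : 1 ≤ p ^ (2 * n) := Nat.one_le_pow _ _ (by omega)
    have hnd : ¬ l ^ r ∣ p ^ (2 * n) - 1 := by
      intro h
      rw [← ZMod.natCast_eq_zero_iff, Nat.cast_sub h1] at h
      push_cast at h
      have := Nat.le_of_dvd (by omega) (orderOf_dvd_of_pow_eq_one (sub_eq_zero.1 h))
      omega
    have hd : l ^ r ∣ (p ^ (2 * n) - 1) * (p ^ (2 * n) + 1) := by
      rw [← ZMod.natCast_eq_zero_iff, Nat.cast_mul, Nat.cast_sub h1]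
      push_cast
      have : (p : ZMod (l ^ r)) ^ (4 * n) = 1 := by rw [← hord, pow_orderOf_eq_one]
      rw [show 4 * n = 2 * n * 2 by ring, pow_mul] at this
      linear_combination this
    by_cases hA : l ∣ p ^ (2 * n) - 1
    · have hB : ¬ l ∣ p ^ (2 * n) + 1 := by
        intro hB
        have := (Nat.dvd_sub hB hA)
        rw [show p ^ (2 * n) + 1 - (p ^ (2 * n) - 1) = 2 by omega] at this
        exact hl2 ((Nat.prime_dvd_prime_iff_eq hl Nat.prime_two).1 this)
      exfalso
      apply hnd
      exact (Nat.Coprime.pow_left r ((hl.coprime_iff_not_dvd).2 hB)).dvd_of_dvd_mul_right hd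
    · exact (Nat.Coprime.pow_left r ((hl.coprime_iff_not_dvd).2 hA)).dvd_of_dvd_mul_left hd

theorem arith3 {p l r N n : ℕ} [NeZero N] (hN : N = 4 * l ^ r) (hp4 : p % 4 = 3) (P : (ZMod N)ˣ) (hP : (P : ZMod N) = p)
    (hord : orderOf (p : ZMod (l ^ r)) = 4 * n)
    (hordN : orderOf (p : ZMod N) = 4 * n) (htot : Nat.totient N = 2 * (4 * n)) (hn : 0 < n) :
    ∀ k : (ZMod N)ˣ, ∃ j : ℕ, k = P ^ j ∨ k = -P ^ j := by
  have hPo : orderOf P = 4 * n := by rw [← orderOf_units, hP, hordN]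
  have hidx : (Subgroup.zpowers P).index = 2 := by
    have h1 := (Subgroup.zpowers P).card_mul_index
    rw [Nat.card_zpowers, hPo, Nat.card_eq_fintype_card, ZMod.card_units_eq_totient, htot,
      mul_comm 2] at h1
    exact Nat.eq_of_mul_eq_mul_left (by omega) h1
  have hpw : ∀ k ∈ Subgroup.zpowers P, ∃ j : ℕ, k = P ^ j := by
    intro k hk
    rw [← mem_powers_iff_mem_zpowers] at hk
    obtain ⟨j, hj⟩ := hk
    exact ⟨j, hj.symm⟩
  have hm1 : (-1 : (ZMod N)ˣ) ∉ Subgroup.zpowers P := by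
    intro h
    obtain ⟨j, hj⟩ := hpw _ h
    have h2 : (p : ZMod N) ^ j = -1 := by
      rw [← hP, ← Units.val_pow_eq_pow_val, ← hj]; simp
    have h4 : (p : ZMod 4) ^ j = -1 := by
      have := congrArg (ZMod.castHom (by rw [hN]; exact Dvd.intro _ rfl : 4 ∣ N) (ZMod 4)) h2
      rwa [map_pow, map_natCast, map_neg, map_one] at this
    have hL : (p : ZMod (l ^ r)) ^ j = -1 := by
      have := congrArg (ZMod.castHom (by rw [hN]; exact Dvd.intro_left _ rfl : l ^ r ∣ N)
        (ZMod (l ^ r))) h2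
      rwa [map_pow, map_natCast, map_neg, map_one] at this
    have h5 : 4 * n ∣ 2 * j := by
      rw [← hord]
      apply orderOf_dvd_of_pow_eq_one
      rw [mul_comm, pow_mul, hL]; ring
    have h6 : Even j := by
      obtain ⟨c, hc⟩ := h5
      exact ⟨n * c, by linarith⟩
    have hp3 : (p : ZMod 4) = -1 := by
      rw [← ZMod.natCast_mod, hp4]; rfl
    rw [hp3, h6.neg_one_pow] at h4
    revert h4; decide
  intro k
  by_cases hk : k ∈ Subgroup.zpowers P
  · obtain ⟨j, hj⟩ := hpw k hk
    exact ⟨j, Or.inl hj⟩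
  · have : (-1) * k ∈ Subgroup.zpowers P := by
      rw [Subgroup.mul_mem_iff_of_index_two hidx]
      exact iff_of_false hm1 hk
    obtain ⟨j, hj⟩ := hpw _ this
    refine ⟨j, Or.inr ?_⟩
    rw [← hj]; simp

end Part5

section Part6

variable (p : ℕ) [Fact p.Prime] {F : Type} [Field F] [Fintype F] [Algebra (ZMod p) F]

theorem mulChar_integral (χ : MulChar F ℂ) (x : F) : IsIntegral ℤ (χ x) := by
  classical
  by_cases hx : x = 0
  · rw [hx, MulChar.map_zero]; exact isIntegral_zero
  · have hc : 0 < Fintype.card F - 1 := by have := Fintype.one_lt_card (α := F); omega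
    apply isIntegral_of_pow_one hc
    rw [← map_pow, FiniteField.pow_card_sub_one_eq_one x hx, map_one]

theorem gamma_integral (χ : MulChar F ℂ) (hneg : χ (-1) = 1) (hχ2 : χ ^ 2 ≠ 1) {n : ℕ}
    (hc : Fintype.card F = p ^ (4 * n)) (hj : (χ ^ 2) ^ p ^ (2 * n) = (χ ^ 2)⁻¹) :
    IsIntegral ℤ (gaussSum χ (psiF p F) / (p : ℂ) ^ n) := by
  classical
  have hp0 : (p : ℂ) ≠ 0 := by exact_mod_cast (Fact.out : p.Prime).ne_zero
  have hJ : IsIntegral ℤ (jacobiSum χ χ) := by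
    unfold jacobiSum
    apply IsIntegral.sum
    intro x _
    exact (mulChar_integral χ x).mul (mulChar_integral χ _)
  have h1 := jacobiSum_mul_nontrivial (χ := χ) (φ := χ) (by rwa [← sq]) (psiF p F)
  have h2 := gauss_pure p (χ ^ 2) hχ2 (by rw [MulChar.pow_apply' _ two_ne_zero, hneg, one_pow])
    (2 * n) hj (m := 2 * n) (by rw [hc]; congr 1; ring)
  apply IsIntegral.of_pow (n := 2) (by norm_num)
  have h3 : (gaussSum χ (psiF p F) / (p : ℂ) ^ n) ^ 2 =
      gaussSum (χ ^ 2) (psiF p F) / (p : ℂ) ^ (2 * n) * jacobiSum χ χ := by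
    rw [div_pow, sq (gaussSum χ _), ← h1, ← sq, ← pow_mul, mul_comm n 2]; ring
  rw [h3]
  have hq0 : (p : ℂ) ^ (2 * n) ≠ 0 := pow_ne_zero _ hp0
  rcases h2 with h2 | h2
  · rw [h2, div_self hq0, one_mul]; exact hJ
  · rw [h2, neg_div, div_self hq0, neg_one_mul]; exact hJ.neg

theorem add_pow_int {l : ℕ} (hl : l.Prime) (r : ℕ) (x y : ℂ) (hx : IsIntegral ℤ x)
    (hy : IsIntegral ℤ y) :
    ∃ c : ℂ, IsIntegral ℤ c ∧ (x + y) ^ l ^ r = x ^ l ^ r + y ^ l ^ r + l * c := by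
  obtain ⟨c, hc⟩ := exists_add_pow_prime_pow_eq hl
    (⟨x, hx⟩ : integralClosure ℤ ℂ) (⟨y, hy⟩ : integralClosure ℤ ℂ) r
  refine ⟨x * y * c, (hx.mul hy).mul c.2, ?_⟩
  have := congrArg (algebraMap (integralClosure ℤ ℂ) ℂ) hc
  simp only [map_add, map_mul, map_pow, map_natCast] at this
  refine Eq.trans this ?_
  change x ^ l ^ r + y ^ l ^ r + l * x * y * (c : ℂ) = _
  ring

theorem sum_pow_int {l : ℕ} (hl : l.Prime) (r : ℕ) {ι : Type} (s : Finset ι) (g : ι → ℂ)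
    (hg : ∀ i, IsIntegral ℤ (g i)) :
    ∃ c : ℂ, IsIntegral ℤ c ∧ (∑ i ∈ s, g i) ^ l ^ r = ∑ i ∈ s, g i ^ l ^ r + l * c := by
  classical
  induction s using Finset.induction_on with
  | empty =>
    refine ⟨0, isIntegral_zero, ?_⟩
    simp [hl.ne_zero]
  | insert a s ha ih =>
    obtain ⟨c, hc, h⟩ := ih
    obtain ⟨d, hd, h'⟩ := add_pow_int hl r (g a) (∑ i ∈ s, g i) (hg a)
      (IsIntegral.sum _ fun i _ => hg i)
    refine ⟨c + d, hc.add hd, ?_⟩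
    rw [Finset.sum_insert ha, Finset.sum_insert ha, h', h]; ring

theorem gauss_congr {l r : ℕ} (hl : l.Prime) (hlp : (l : ZMod p) ≠ 0) (χ : MulChar F ℂ)
    (htriv : ∀ t : ZMod p, t ≠ 0 → χ (algebraMap (ZMod p) F t) = 1) :
    ∃ c : ℂ, IsIntegral ℤ c ∧
      gaussSum χ (psiF p F) ^ l ^ r = gaussSum (χ ^ l ^ r) (psiF p F) + l * c := by
  obtain ⟨c, hc, h⟩ := sum_pow_int hl r (Finset.univ : Finset F)
    (fun x => χ x * psiF p F x) (fun x => (mulChar_integral χ x).mul (psiF_integral p x))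
  refine ⟨c, hc, ?_⟩
  have hL : l ^ r ≠ 0 := pow_ne_zero _ hl.ne_zero
  have hu : IsUnit ((l ^ r : ℕ) : F) := by
    rw [isUnit_iff_ne_zero]
    have : ((l ^ r : ℕ) : F) = algebraMap (ZMod p) F (l ^ r) := by simp
    rw [this]
    intro h
    exact pow_ne_zero r hlp ((map_eq_zero _).1 h)
  have hχL : (χ ^ l ^ r) ((l ^ r : ℕ) : F) = 1 := by
    rw [MulChar.pow_apply' _ hL]
    have : ((l ^ r : ℕ) : F) = algebraMap (ZMod p) F (l ^ r) := by simp
    rw [this, htriv _ (pow_ne_zero r hlp), one_pow]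
  have h2 := gaussSum_mulShift (χ ^ l ^ r) (psiF p F) hu.unit
  rw [IsUnit.unit_spec, hχL, one_mul] at h2
  rw [← h2]
  have h3 : gaussSum χ (psiF p F) = ∑ x : F, χ x * psiF p F x := rfl
  rw [h3, h, gaussSum]
  congr 1
  refine Finset.sum_congr rfl fun x _ => ?_
  rw [mul_pow, MulChar.pow_apply' _ hL, AddChar.mulShift_apply, ← nsmul_eq_mul,
    AddChar.map_nsmul_eq_pow]

/-- the final congruence -/
theorem final_congr {l r n : ℕ} (hl : l.Prime) (hr : 1 ≤ r) (hl3 : 3 ≤ l) (hpl : (p : ZMod l) ≠ 0)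
    (a b : ℤ) (s G c : ℂ) (hs : s ^ 2 = -l) (hc : IsIntegral ℤ c)
    (hG : G = (p : ℂ) ^ n * (a + b * s))
    (h : G ^ l ^ r = - (p : ℂ) ^ (2 * n) + l * c) :
    a ≡ -(p : ℤ) ^ n [ZMOD (l : ℤ)] := by
  have : Fact l.Prime := ⟨hl⟩
  have hsi : IsIntegral ℤ s := by
    apply IsIntegral.of_pow (n := 2) (by norm_num)
    rw [hs]
    have h0 : IsIntegral ℤ (((l : ℤ) : ℂ)) := isIntegral_algebraMap (x := (l : ℤ))
    rw [Int.cast_natCast] at h0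
    exact h0.neg
  have hai : ∀ z : ℤ, IsIntegral ℤ (z : ℂ) := fun z => isIntegral_algebraMap (x := z)
  obtain ⟨d, hd, hd'⟩ := add_pow_int hl r (a : ℂ) (b * s) (hai a) ((hai b).mul hsi)
  have hL : 2 ≤ l ^ r := le_trans (by omega) (Nat.le_self_pow (by omega) l)
  have hsL : s ^ l ^ r = -l * s ^ (l ^ r - 2) := by
    rw [← hs, ← pow_add]; congr 1; omega
  set L := l ^ r with hLdef
  have hdvd : (l : ℤ) ∣ (p : ℤ) ^ (n * L) * a ^ L + (p : ℤ) ^ (2 * n) := by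
    apply int_dvd_of_integral _ _ (c + (p : ℤ) ^ (n * L) * ((b : ℂ) ^ L * s ^ (L - 2) - d))
    · refine hc.add (((hai p).pow _).mul ((((hai b).pow _).mul (hsi.pow _)).sub hd))
    · rw [hG, mul_pow, hd', mul_pow, hsL, ← pow_mul] at h
      push_cast
      linear_combination h
    · exact_mod_cast hl.ne_zero
  rw [← ZMod.intCast_zmod_eq_zero_iff_dvd] at hdvd
  push_cast at hdvd
  rw [pow_mul, hLdef, ZMod.pow_card_pow, ZMod.pow_card_pow] at hdvd
  rw [← ZMod.intCast_eq_intCast_iff]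
  push_cast
  have hpn : (p : ZMod l) ^ n ≠ 0 := pow_ne_zero _ hpl
  apply mul_left_cancel₀ hpn
  linear_combination hdvd

theorem descent {l : ℕ} (hl : l.Prime) (hl4 : l % 4 = 1) (x y : ℤ) (Q : ℤ)
    (h : l * x ^ 2 + y ^ 2 = 4 * l * Q) :
    ∃ a b : ℤ, x = 2 * a ∧ y = - (l * (2 * b)) ∧ a ^ 2 + l * b ^ 2 = Q := by
  have hl0 : (l : ℤ) ≠ 0 := by exact_mod_cast hl.ne_zero
  have h1 : (l : ℤ) ∣ y ^ 2 := ⟨4 * Q - x ^ 2, by linear_combination h⟩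
  obtain ⟨z, rfl⟩ := (Nat.prime_iff_prime_int.1 hl).dvd_of_dvd_pow h1
  have h2 : x ^ 2 + l * z ^ 2 = 4 * Q := by
    apply mul_left_cancel₀ hl0
    linear_combination h
  obtain ⟨m, hm⟩ : ∃ m : ℤ, (l : ℤ) = 4 * m + 1 := ⟨l / 4, by omega⟩
  rw [hm] at h2
  rcases Int.even_or_odd' x with ⟨a, rfl | rfl⟩ <;> rcases Int.even_or_odd' z with ⟨b, rfl | rfl⟩
  · refine ⟨a, -b, rfl, by ring, ?_⟩
    rw [hm]
    linarith
  · exfalso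
    ring_nf at h2; omega
  · exfalso
    ring_nf at h2; omega
  · exfalso
    ring_nf at h2; omega

end Part6

theorem pow_neg_val {G : Type*} [Group G] {N : ℕ} [NeZero N] (x : G) (hx : x ^ N = 1)
    (k : ZMod N) : x ^ (-k).val = x⁻¹ ^ k.val := by
  rw [inv_pow]
  apply eq_inv_of_mul_eq_one_left
  rw [← pow_add, ← pow_val_eq x hx (0 : ZMod N), ZMod.val_zero, pow_zero]
  push_cast; simp

theorem statement13 (p l r N f : ℕ) (hp : p.Prime) (hl : l.Prime) (hl4 : l % 4 = 1)
    (hr : 1 ≤ r) (hN : N = 4 * l ^ r) (hNp : Nat.gcd N p = 1) (hp4 : p % 4 = 3)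
    (hord : orderOf (p : ZMod (l ^ r)) = Nat.totient (l ^ r))
    (hf : orderOf (p : ZMod N) = f) (hind : f = Nat.totient N / 2)
    (F : Type) [Field F] [Fintype F] [Algebra (ZMod p) F]
    (hcard : Fintype.card F = p ^ f)
    (χ : MulChar F ℂ) (hχord : orderOf χ = N) :
    ∃ a b : ℤ,
      a ^ 2 + (l : ℤ) * b ^ 2 = (p : ℤ) ^ (f / 2) ∧
      a ≡ -(p : ℤ) ^ (f / 4) [ZMOD (l : ℤ)] ∧
      gaussSumN p χ 1 = (p : ℂ) ^ ((f / 4 : ℕ)) * ((a : ℂ) + (b : ℂ) * sqrtNeg l) := by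
  classical
  haveI : Fact p.Prime := ⟨hp⟩
  haveI : Fact l.Prime := ⟨hl⟩
  have hL0 : 0 < l ^ r := pow_pos hl.pos r
  haveI : NeZero N := ⟨by omega⟩
  have hN1 : 1 < N := by omega
  haveI : Fact (1 < N) := ⟨hN1⟩
  have hl2 : l ≠ 2 := by omega
  have hl3 : 3 ≤ l := by have := hl.two_le; omega
  have hlr : l ∣ l ^ r := dvd_pow_self l (by omega)
  have hc4 : Nat.Coprime 4 (l ^ r) := by
    apply Nat.Coprime.pow_right
    rw [show 4 = 2 ^ 2 by norm_num]
    apply Nat.Coprime.pow_left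
    exact (Nat.coprime_primes Nat.prime_two hl).2 (Ne.symm hl2)
  have hne : p ≠ l := by
    rintro rfl
    have : p ∣ Nat.gcd N p := Nat.dvd_gcd (by rw [hN]; exact hlr.mul_left 4) dvd_rfl
    rw [hNp] at this
    exact hp.one_lt.ne' (Nat.dvd_one.1 this)
  have hpl : (p : ZMod l) ≠ 0 := by
    rw [Ne, ZMod.natCast_eq_zero_iff, Nat.prime_dvd_prime_iff_eq hl hp]; exact hne.symm
  have hlp : (l : ZMod p) ≠ 0 := by
    rw [Ne, ZMod.natCast_eq_zero_iff, Nat.prime_dvd_prime_iff_eq hp hl]; exact hne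
  have htot4 : Nat.totient 4 = 2 := by decide
  have htotN : Nat.totient N = 2 * Nat.totient (l ^ r) := by
    rw [hN, Nat.totient_mul hc4, htot4]
  have hfL : f = Nat.totient (l ^ r) := by omega
  obtain ⟨n, hfn⟩ : ∃ n, f = 4 * n := by
    rw [hfL, Nat.totient_prime_pow hl hr]
    exact ⟨l ^ (r - 1) * ((l - 1) / 4), by
      have : l - 1 = 4 * ((l - 1) / 4) := by omega
      conv_lhs => rw [this]
      ring⟩
  have hn : 0 < n := by
    have := Nat.totient_pos.2 hL0
    omega
  have hordL : orderOf (p : ZMod (l ^ r)) = 4 * n := by rw [hord, ← hfL, hfn]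
  have hordN : orderOf (p : ZMod N) = 4 * n := by rw [hf, hfn]
  have htot : Nat.totient N = 2 * (4 * n) := by rw [htotN, ← hfL, hfn]
  have hq := nonres (p := p) hl4 hr hpl hord
  have hpl1 : (p : ZMod l) ≠ 1 := by
    intro h; rw [h, map_one] at hq; norm_num at hq
  have hc : Fintype.card F = p ^ (4 * n) := by rw [hcard, hfn]
  clear hcard
  -- triviality on the prime field
  obtain ⟨M, ⟨M', hNM⟩, hM⟩ := arith1 (n := n) hl hp.one_lt hN hl2 hp4 hpl1 (by
    rw [← hordL, pow_orderOf_eq_one])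
  have hχN : χ ^ N = 1 := by rw [← hχord, pow_orderOf_eq_one]
  have hχM : χ ^ M = 1 := by rw [hNM, pow_mul, hχN, one_pow]
  have hpow1 : ∀ t : ZMod p, t ≠ 0 → (algebraMap (ZMod p) F t) ^ (p - 1) = 1 := by
    intro t ht
    rw [← map_pow, ZMod.pow_card_sub_one_eq_one ht, map_one]
  have hne0 : ∀ t : ZMod p, t ≠ 0 → algebraMap (ZMod p) F t ≠ 0 := by
    intro t ht h; exact ht ((map_eq_zero _).1 h)
  have htr : ∀ φ : MulChar F ℂ, φ ^ M = 1 →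
      ∀ t : ZMod p, t ≠ 0 → φ (algebraMap (ZMod p) F t) = 1 := by
    intro φ hφ t ht
    exact char_triv φ (by rw [hM, hc]) hφ (hne0 t ht) (hpow1 t ht)
  have hχiM : χ⁻¹ ^ M = 1 := by rw [inv_pow, hχM, inv_one]
  have hng : ∀ φ : MulChar F ℂ, φ ^ M = 1 → φ (-1) = 1 :=
    fun φ hφ => char_neg_one p φ (htr φ hφ)
  have hnot : ∀ m, 0 < m → m < N → χ ^ m ≠ 1 := by
    intro m h0 h1 h
    have := Nat.le_of_dvd h0 (orderOf_dvd_of_pow_eq_one h)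
    omega
  have hχ1 : χ ≠ 1 := by simpa using hnot 1 one_pos hN1
  have hχ2 : χ ^ 2 ≠ 1 := hnot 2 (by norm_num) (by omega)
  have hχi2 : χ⁻¹ ^ 2 ≠ 1 := by rw [inv_pow]; simpa using hχ2
  have hpure : (χ ^ 2) ^ p ^ (2 * n) = (χ ^ 2)⁻¹ := by
    apply eq_inv_of_mul_eq_one_left
    obtain ⟨c, hc'⟩ := arith2 hl hp.one_lt hn hN hl2 hp4 hordL
    rw [← pow_succ, ← pow_mul, hc', pow_mul, hχN, one_pow]
  have hpurei : (χ⁻¹ ^ 2) ^ p ^ (2 * n) = (χ⁻¹ ^ 2)⁻¹ := by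
    rw [inv_pow χ, inv_pow, hpure]
  set G := gaussSum χ (psiF p F) with hG
  set G' := gaussSum χ⁻¹ (psiF p F) with hG'
  have hγ : IsIntegral ℤ (G / (p : ℂ) ^ n) := gamma_integral p χ (hng χ hχM) hχ2 hc hpure
  have hγ' : IsIntegral ℤ (G' / (p : ℂ) ^ n) := gamma_integral p χ⁻¹ (hng _ hχiM) hχi2 hc hpurei
  have hGG : G * G' = (p : ℂ) ^ (4 * n) := by
    rw [hG, hG', gauss_mul_inv p χ hχ1 (hng χ hχM), hc]; push_cast; rfl
  -- Galois theory
  have hcop : Nat.Coprime p N := by rw [Nat.coprime_comm]; exact hNp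
  set P := ZMod.unitOfCoprime p hcop with hPdef
  have hP : (P : ZMod N) = p := ZMod.coe_unitOfCoprime p hcop
  have hgen := arith3 hN hp4 P hP hordL hordN htot hn
  set ζ : ℂ := Complex.exp (2 * Real.pi * Complex.I / N) with hζdef
  have hζ : IsPrimitiveRoot ζ N := Complex.isPrimitiveRoot_exp N (NeZero.ne N)
  obtain ⟨τ, hτm, hτP, hτn, hτ1⟩ := tau_exists hl4 hr hN hp4 hq hζ P hP
  set u : (ZMod N)ˣ → ℂ := fun k => gaussSum (χ ^ (k : ZMod N).val) (psiF p F) with hu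
  set v : (ZMod N)ˣ → ℂ := fun k => gaussSum (χ⁻¹ ^ (k : ZMod N).val) (psiF p F) with hv
  have hum := gauss_mem p hN1 hζ χ hχord (htr χ hχM)
  have hvm := gauss_mem p hN1 hζ χ⁻¹ (by rw [orderOf_inv, hχord]) (htr _ hχiM)
  have hχiN : χ⁻¹ ^ N = 1 := by rw [inv_pow, hχN, inv_one]
  have hPk : ∀ φ : MulChar F ℂ, φ ^ N = 1 → ∀ k : (ZMod N)ˣ,
      gaussSum (φ ^ ((P * k : (ZMod N)ˣ) : ZMod N).val) (psiF p F) =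
      gaussSum (φ ^ (k : ZMod N).val) (psiF p F) := by
    intro φ hφ k
    rw [pow_val_eq φ hφ _ ((k : ZMod N).val * p ^ 1) (by
      push_cast; rw [hP]; simp [mul_comm]), pow_mul, gauss_frob]
  have huP : ∀ k, u (P * k) = u k := hPk χ hχN
  have hvP : ∀ k, v (P * k) = v k := hPk χ⁻¹ hχiN
  have hun : ∀ k, u (-k) = v k := by
    intro k
    simp only [hu, hv, Units.val_neg, pow_neg_val χ hχN]
  have hvn : ∀ k, v (-k) = u k := by
    intro k
    simp only [hu, hv, Units.val_neg, pow_neg_val χ⁻¹ hχiN, inv_inv]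
  have hu1 : u 1 = G := by simp only [hu, Units.val_one, ZMod.val_one, pow_one, hG]
  have hv1 : v 1 = G' := by simp only [hv, Units.val_one, ZMod.val_one, pow_one, hG']
  obtain ⟨r1, hr1⟩ : ∃ q : ℚ, G + G' = q := by
    apply rat_of_const hζ (u + v) (Subalgebra.add_mem _ hum hvm)
    intro k
    rw [const_of_gen P hgen (u + v) (fun k => by simp only [Pi.add_apply, huP, hvP])
      (fun k => by simp only [Pi.add_apply, hun, hvn, add_comm]) k, Pi.add_apply, hu1, hv1]
  obtain ⟨r2, hr2⟩ : ∃ q : ℚ, (G - G') * τ 1 = q := by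
    apply rat_of_const hζ ((u - v) * τ) (Subalgebra.mul_mem _ (Subalgebra.sub_mem _ hum hvm) hτm)
    intro k
    rw [const_of_gen P hgen ((u - v) * τ)
      (fun k => by simp only [Pi.mul_apply, Pi.sub_apply, huP, hvP, hτP])
      (fun k => by simp only [Pi.mul_apply, Pi.sub_apply, hun, hvn, hτn]; ring) k,
      Pi.mul_apply, Pi.sub_apply, hu1, hv1]
  set s := sqrtNeg l with hsdef
  have hs2 : s ^ 2 = -(l : ℂ) := sqrtNeg_sq l
  have hr2' : ∃ q : ℚ, (G - G') * s = q := by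
    have : s ^ 2 = τ 1 ^ 2 := by rw [hs2, hτ1]
    rcases sq_eq_sq_iff_eq_or_eq_neg.1 this with h | h
    · exact ⟨r2, by rw [h, hr2]⟩
    · exact ⟨-r2, by rw [h, mul_neg, hr2]; push_cast; rfl⟩
  obtain ⟨r3, hr3⟩ := hr2'
  have hsi : IsIntegral ℤ s := by
    apply IsIntegral.of_pow (n := 2) (by norm_num)
    rw [hs2]
    have h0 : IsIntegral ℤ (((l : ℤ) : ℂ)) := isIntegral_algebraMap (x := (l : ℤ))
    rw [Int.cast_natCast] at h0
    exact h0.neg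
  have hp0 : (p : ℂ) ≠ 0 := by exact_mod_cast hp.ne_zero
  have hpn0 : (p : ℂ) ^ n ≠ 0 := pow_ne_zero _ hp0
  obtain ⟨x, hx⟩ := int_of_rat_integral (c := G / (p : ℂ) ^ n + G' / (p : ℂ) ^ n)
    ⟨r1 / p ^ n, by push_cast; rw [← hr1]; ring⟩ (hγ.add hγ')
  obtain ⟨y, hy⟩ := int_of_rat_integral (c := (G / (p : ℂ) ^ n - G' / (p : ℂ) ^ n) * s)
    ⟨r3 / p ^ n, by push_cast; rw [← hr3]; ring⟩ ((hγ.sub hγ').mul hsi)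
  set γ := G / (p : ℂ) ^ n with hγdef
  set γ' := G' / (p : ℂ) ^ n with hγ'def
  have hγγ : γ * γ' = (p : ℂ) ^ (2 * n) := by
    rw [hγdef, hγ'def, div_mul_div_comm, hGG, div_eq_iff (mul_ne_zero hpn0 hpn0)]; ring
  have heq : (l : ℤ) * x ^ 2 + y ^ 2 = 4 * l * (p : ℤ) ^ (2 * n) := by
    have : (l : ℂ) * (x : ℂ) ^ 2 + (y : ℂ) ^ 2 = 4 * l * (p : ℂ) ^ (2 * n) := by
      rw [← hx, ← hy, ← hγγ, mul_pow, hs2]; ring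
    exact_mod_cast this
  obtain ⟨a, b, hxa, hyb, hab⟩ := descent hl hl4 x y _ heq
  have hl0 : (l : ℂ) ≠ 0 := by exact_mod_cast hl.ne_zero
  have hγab : γ = a + b * s := by
    rw [hxa] at hx
    rw [hyb] at hy
    push_cast at hx hy
    have h3 : γ - γ' = 2 * b * s := by
      apply mul_left_cancel₀ (neg_ne_zero.2 hl0)
      linear_combination s * hy - (γ - γ') * hs2
    linear_combination (hx + h3) / 2
  have hGab : G = (p : ℂ) ^ n * (a + b * s) := by
    rw [← hγab, hγdef, mul_div_cancel₀ _ hpn0]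
  have hf2 : f / 2 = 2 * n := by omega
  have hf4 : f / 4 = n := by omega
  refine ⟨a, b, by rw [hf2, hab], ?_, by rw [hf4, gaussSumN_eq]; exact hGab⟩
  rw [hf4]
  obtain ⟨c, hci, hcc⟩ := gauss_congr p (r := r) hl hlp χ (htr χ hχM)
  have h4 : gaussSum (χ ^ l ^ r) (psiF p F) = - (p : ℂ) ^ (2 * n) := by
    apply gauss_four p hp4 n hn hc
    · rw [← pow_mul, mul_comm, ← hN, hχN]
    · rw [← pow_mul]
      exact hnot _ (by omega) (by omega)
    · apply hng
      rw [← pow_mul, mul_comm, pow_mul, hχM, one_pow]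
  rw [h4] at hcc
  exact final_congr p hl hr hl3 hpl a b s G c hs2 hci hGab hcc
end

section
/- Case F2: Let l be an odd prime, let r ≥ 1, and let N = 4 l^r. Suppose p ≡ 1 (mod 4), the multiplicative order of p modulo l^r is φ(l^r), and f = φ(N)/2 (so f = φ(l^r)). If l ≡ 1 (mod 4), then there exists ε ∈ {1, -1, i, -i} such that G(χ) = ε p^{f/2}. If l ≡ 3 (mod 4), then there exist ε ∈ {1, -1, i, -i} and integers a, b with a² + b² = p such that G(χ) = ε · √p · p^{f/2 - 1} · (a + b i). -/
open Complex Polynomial IntermediateField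

lemma ex_val {F : Type} [Field F] [Fintype F] {n : ℕ} (hn : 0 < n) {z : ℂ} (hz : IsPrimitiveRoot z n)
    {g : F} (hg : IsPrimitiveRoot g n) (hgen : ∀ x : F, ∃ P : ℤ[X], aeval g P = x) :
    ∃ V : ValuationSubring ℂ, 
      (∀ P : ℤ[X], aeval g P = 0 → V.valuation (aeval z P) < 1) ∧
      (∀ P : ℤ[X], aeval g P ≠ 0 → V.valuation (aeval z P) = 1) := by
  classical
  let φ : ℤ[X] →+* ℂ := (aeval z : ℤ[X] →ₐ[ℤ] ℂ).toRingHom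
  let γ : ℤ[X] →+* F := (aeval g : ℤ[X] →ₐ[ℤ] F).toRingHom
  have hker : ∀ P, φ P = 0 → γ P = 0 := by
    intro P hP
    have h1 : minpoly ℤ z ∣ P := minpoly.isIntegrallyClosed_dvd (hz.isIntegral hn) hP
    rw [← cyclotomic_eq_minpoly hz hn] at h1
    obtain ⟨Q, rfl⟩ := h1
    have : NeZero (n : F) := haveI : NeZero n := ⟨hn.ne'⟩; hg.neZero'
    have h2 : γ (cyclotomic n ℤ) = 0 := by
      have := (isRoot_cyclotomic_iff (R := F) (n := n) (μ := g)).2 hg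
      rw [IsRoot.def, ← map_cyclotomic_int, eval_map] at this
      exact this
    rw [map_mul, h2, zero_mul]
  let I : Ideal φ.range := (RingHom.ker γ).map φ.rangeRestrict
  have hmem : ∀ y ∈ I, ∃ P, γ P = 0 ∧ φ P = y := by
    intro y hy
    obtain ⟨P, hP, rfl⟩ := (Ideal.mem_map_iff_of_surjective _ φ.rangeRestrict_surjective).1 hy
    exact ⟨P, hP, rfl⟩
  have hI : I ≠ ⊤ := by
    intro h
    obtain ⟨P, hP, h1⟩ := hmem 1 (h ▸ Submodule.mem_top)
    have : γ (P - 1) = 0 := hker _ (by rw [map_sub, h1]; simp)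
    rw [map_sub, hP] at this
    simp at this
  obtain ⟨V, hV, hVI⟩ := I.image_subset_nonunits_valuationSubring hI
  have hle : ∀ P, V.valuation (φ P) ≤ 1 := fun P => (V.valuation_le_one_iff _).2 (hV ⟨P, rfl⟩)
  have hlt : ∀ P, γ P = 0 → V.valuation (φ P) < 1 := by
    intro P hP
    have : φ P ∈ V.nonunits := hVI ⟨φ.rangeRestrict P, Ideal.mem_map_of_mem _ hP, rfl⟩
    exact this
  refine ⟨V, hlt, fun P hP => ?_⟩
  obtain ⟨Q, hQ⟩ := hgen (aeval g P)⁻¹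
  have h1 : V.valuation (φ (P * Q - 1)) < 1 := hlt _ (by
    change aeval g (P * Q - 1) = 0
    rw [map_sub, map_mul, hQ, mul_inv_cancel₀ hP]; simp)
  have h2 : V.valuation (φ (P * Q)) = 1 := by
    have := V.valuation.map_one_add_of_lt h1
    rw [← this]; congr 1; rw [map_sub]; simp
  rw [map_mul, map_mul] at h2
  exact ((mul_eq_one_iff_of_one_le (α := (V.ValueGroup)ᵒᵈ) (hle P) (hle Q)).1 h2).1

section
variable {F : Type} [Field F] [Fintype F] {Γ : Type} [LinearOrderedCommGroupWithZero Γ] (v : Valuation ℂ Γ)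

lemma v_rou {z : ℂ} {n : ℕ} (hn : n ≠ 0) (h : z ^ n = 1) : v z = 1 := by
  have := congrArg v h
  rw [map_pow, map_one] at this
  exact (pow_left_inj₀ zero_le zero_le hn).1 (this.trans (one_pow n).symm)

lemma v_mulChar (χ : MulChar F ℂ) {x : F} (hx : x ≠ 0) : v (χ x) = 1 := by
  have h : Fintype.card F - 1 ≠ 0 := by have := Fintype.one_lt_card (α := F); omega
  refine v_rou v h ?_
  rw [← map_pow, FiniteField.pow_card_sub_one_eq_one x hx, map_one]

lemma v_mulChar_le (χ : MulChar F ℂ) (x : F) : v (χ x) ≤ 1 := by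
  by_cases hx : x = 0
  · rw [hx, MulChar.map_zero, map_zero]; exact zero_le_one
  · exact (v_mulChar v χ hx).le

lemma v_addChar (ψ : AddChar F ℂ) (x : F) : v (ψ x) = 1 := by
  have h : Fintype.card F ≠ 0 := Fintype.card_ne_zero
  refine v_rou v h ?_
  rw [← AddChar.map_nsmul_eq_pow]
  simp

lemma v_gauss_le (χ : MulChar F ℂ) (ψ : AddChar F ℂ) : v (gaussSum χ ψ) ≤ 1 := by
  refine v.map_sum_le fun x _ => ?_
  rw [map_mul, v_addChar, mul_one]
  exact v_mulChar_le v χ x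

lemma gauss_one {ψ : AddChar F ℂ} (hψ : ψ ≠ 1) : gaussSum (1 : MulChar F ℂ) ψ = -1 := by
  classical
  have h := AddChar.sum_eq_zero_of_ne_one hψ
  rw [← Finset.add_sum_erase _ _ (Finset.mem_univ (0 : F))] at h
  rw [gaussSum, ← Finset.add_sum_erase _ _ (Finset.mem_univ (0 : F))]
  rw [AddChar.map_zero_eq_one] at h
  rw [MulChar.map_zero, zero_mul, zero_add]
  have h2 : ∑ x ∈ Finset.univ.erase (0 : F), (1 : MulChar F ℂ) x * ψ x = ∑ x ∈ Finset.univ.erase (0 : F), ψ x := by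
    refine Finset.sum_congr rfl fun x hx => ?_
    rw [MulChar.one_apply (isUnit_iff_ne_zero.2 (Finset.ne_of_mem_erase hx)), one_mul]
  rw [h2]; linear_combination h

lemma v_gauss_one {ψ : AddChar F ℂ} (hψ : ψ ≠ 1) : v (gaussSum (1 : MulChar F ℂ) ψ) = 1 := by
  rw [gauss_one hψ, Valuation.map_neg, map_one]

lemma v_gauss_mul (χ φ : MulChar F ℂ) {ψ : AddChar F ℂ} (hψ : ψ ≠ 1) :
    v (gaussSum χ ψ) * v (gaussSum φ ψ) ≤ v (gaussSum (χ * φ) ψ) := by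
  by_cases h : χ * φ = 1
  · rw [h, v_gauss_one v hψ]
    exact mul_le_one' (v_gauss_le v _ _) (v_gauss_le v _ _)
  · rw [← map_mul, ← jacobiSum_mul_nontrivial h, map_mul]
    refine mul_le_of_le_one_right' (v.map_sum_le fun x _ => ?_)
    rw [map_mul]
    exact mul_le_one' (v_mulChar_le v _ _) (v_mulChar_le v _ _)

lemma v_gauss_pow (χ : MulChar F ℂ) {ψ : AddChar F ℂ} (hψ : ψ ≠ 1) (n : ℕ) :
    v (gaussSum χ ψ) ^ n ≤ v (gaussSum (χ ^ n) ψ) := by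
  induction n with
  | zero => rw [pow_zero, pow_zero, v_gauss_one v hψ]
  | succ n ih =>
    rw [pow_succ, pow_succ]
    exact (mul_le_mul_left ih _).trans (v_gauss_mul v _ _ hψ)

lemma v_chain {p : ℕ} {ψ : AddChar F ℂ} (hψ : ψ ≠ 1) (hfrob : ∀ χ : MulChar F ℂ, gaussSum (χ ^ p) ψ = gaussSum χ ψ)
    (τ : MulChar F ℂ) (d A : ℕ → ℕ) (hA0 : A 0 = 0) (hA : ∀ n, A (n + 1) = p * A n + d n) (n : ℕ) :
    v (gaussSum τ ψ) ^ (∑ i ∈ Finset.range n, d i) ≤ v (gaussSum (τ ^ A n) ψ) := by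
  induction n with
  | zero => simp [hA0, v_gauss_one v hψ]
  | succ n ih =>
    rw [Finset.sum_range_succ, pow_add, hA, pow_add, mul_comm p, pow_mul]
    refine le_trans ?_ (v_gauss_mul v _ _ hψ)
    rw [hfrob]
    exact mul_le_mul' ih (v_gauss_pow v _ hψ _)

lemma gauss_frob_s14 (p : ℕ) [Fact p.Prime] [CharP F p] {ψ : AddChar F ℂ} (hψ : ∀ x, ψ (x ^ p) = ψ x)
    (χ : MulChar F ℂ) : gaussSum (χ ^ p) ψ = gaussSum χ ψ := by
  have hb : Function.Bijective (frobenius F p) :=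
    (Finite.injective_iff_bijective).1 (frobenius_inj F p)
  rw [gaussSum, gaussSum, ← hb.sum_comp (fun x => χ x * ψ x)]
  refine Finset.sum_congr rfl fun x _ => ?_
  rw [frobenius_def, hψ, MulChar.pow_apply' _ (Fact.out : p.Prime).ne_zero, map_pow]

lemma v_p_le {p : ℕ} (hp : p.Prime) {z : ℂ} (hz : IsPrimitiveRoot z p) : v (p : ℂ) ≤ v (z - 1) ^ (p - 1) := by
  obtain ⟨n, rfl⟩ : ∃ n, p = n + 1 := ⟨p - 1, by have := hp.one_lt; omega⟩
  have h := hz.prod_one_sub_pow_eq_order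
  push_cast
  rw [← h, map_prod]
  have : v (z - 1) ^ n = ∏ k ∈ Finset.range n, v (z - 1) := by simp
  rw [this]
  refine Finset.prod_le_prod' fun k _ => ?_
  rw [← v.map_neg, neg_sub, ← geom_sum_mul, map_mul]
  refine mul_le_of_le_one_left' (v.map_sum_le fun i _ => ?_)
  rw [map_pow, v_rou v (by omega) hz.pow_eq_one, one_pow]

lemma v_z_lt {p : ℕ} (hp : p.Prime) {z : ℂ} (hz : IsPrimitiveRoot z p) (hvp : v (p : ℂ) < 1) : v (z - 1) < 1 := by
  have hz1 : v z = 1 := v_rou v hp.ne_zero hz.pow_eq_one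
  have hle : v (z - 1) ≤ 1 := (v.map_sub _ _).trans (by rw [hz1, map_one, max_self])
  by_contra hcon
  have h1 : v (z - 1) = 1 := le_antisymm hle (not_lt.1 hcon)
  -- (w+1)^p = w^p + p w r + 1
  obtain ⟨R, hR⟩ := exists_add_pow_prime_eq (R := v.integer) hp ⟨z - 1, hle⟩ 1
  have h2 := congrArg Subtype.val hR
  push_cast at h2
  simp only [sub_add_cancel, hz.pow_eq_one] at h2
  have h3 : (z - 1) ^ p = - ((p : ℂ) * ((z - 1) * R)) := by
    simp at h2
    linear_combination -h2
  have h4 := congrArg v h3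
  rw [map_pow, h1, one_pow, v.map_neg, map_mul, map_mul, h1, one_mul] at h4
  have : v (p : ℂ) * v (R : ℂ) < 1 := mul_lt_one_of_lt_of_le hvp R.2
  exact absurd h4 this.ne'
end
lemma u_char {p : ℕ} [Fact p.Prime] {F : Type} [Field F] [Fintype F] [Algebra (ZMod p) F]
    (hc : 2 < Fintype.card F) :
    ∑ x : F, x ^ (Fintype.card F - 2) * algebraMap (ZMod p) F (Algebra.trace (ZMod p) F x) = -1 := by
  classical
  set q := Fintype.card F with hq
  have hfr : q = p ^ Module.finrank (ZMod p) F := by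
    rw [hq, Module.card_eq_pow_finrank (K := ZMod p), ZMod.card]
  set d := Module.finrank (ZMod p) F with hd
  have hp1 : 1 < p := (Fact.out : p.Prime).one_lt
  simp_rw [FiniteField.algebraMap_trace_eq_sum_pow, Nat.card_zmod, Finset.mul_sum, ← pow_add]
  rw [Finset.sum_comm]
  have hd0 : 0 < d := by
    rcases Nat.eq_zero_or_pos d with h | h
    · rw [h, pow_zero] at hfr; omega
    · exact h
  have key : ∀ i ∈ Finset.range d, ∑ x : F, x ^ (q - 2 + p ^ i) = if i = 0 then -1 else 0 := by
    intro i hi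
    have hi' : i < d := Finset.mem_range.1 hi
    have hpos : 0 < p ^ i := by positivity
    by_cases h0 : i = 0
    · subst h0
      have e : q - 2 + p ^ 0 = q - 1 := by rw [pow_zero]; omega
      rw [if_pos rfl, e, ← Finset.add_sum_erase _ _ (Finset.mem_univ (0 : F)), zero_pow (by omega), zero_add,
        Finset.sum_congr rfl (g := fun _ => (1 : F))
          (fun x hx => FiniteField.pow_card_sub_one_eq_one x (Finset.ne_of_mem_erase hx))]
      rw [Finset.sum_const, Finset.card_erase_of_mem (Finset.mem_univ _), Finset.card_univ, ← hq, nsmul_eq_mul,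
        Nat.cast_sub (by omega), hq, FiniteField.cast_card_eq_zero]
      simp
    · rw [if_neg h0]
      have h1 : p ^ 1 ≤ p ^ i := Nat.pow_le_pow_right (by omega) (by omega); rw [pow_one] at h1
      have h2 : p ^ i < p ^ d := Nat.pow_lt_pow_right hp1 hi'
      rw [← hfr] at h2
      rw [← FiniteField.sum_pow_lt_card_sub_one F (p ^ i - 1) (by rw [← hq]; omega)]
      refine Finset.sum_congr rfl fun x _ => ?_
      by_cases hx : x = 0
      · rw [hx, zero_pow (by omega), zero_pow (by omega)]
      · have e : q - 2 + p ^ i = (q - 1) + (p ^ i - 1) := by omega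
        rw [e, pow_add, FiniteField.pow_card_sub_one_eq_one x hx, one_mul]
  rw [Finset.sum_congr rfl key, Finset.sum_ite_eq' (Finset.range d) 0, if_pos (Finset.mem_range.2 hd0)]

lemma v_base {p : ℕ} [Fact p.Prime] {F : Type} [Field F] [Fintype F] [Algebra (ZMod p) F]
    (hc : 2 < Fintype.card F) {Γ : Type} [LinearOrderedCommGroupWithZero Γ] (v : Valuation ℂ Γ)
    {g : F} {z zp : ℂ} (hzp : IsPrimitiveRoot zp p) (hvp : v (p : ℂ) < 1)
    (hv : ∀ P : ℤ[X], aeval g P ≠ 0 → v (aeval z P) = 1)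
    (τ : MulChar F ℂ) (hτ1 : τ ≠ 1) (hg : ∀ x : F, x ≠ 0 → ∃ n : ℕ, x = g ^ n)
    (hτ : τ g = z ^ (Fintype.card F - 2)) (ψ : AddChar F ℂ)
    (hψ : ∀ x, ψ x = zp ^ (Algebra.trace (ZMod p) F x).val) :
    v (gaussSum τ ψ) = v (zp - 1) := by
  classical
  let T : F → ℕ := fun x => (Algebra.trace (ZMod p) F x).val
  have hzp1 : v zp = 1 := v_rou v (Fact.out : p.Prime).ne_zero hzp.pow_eq_one
  have hlt := v_z_lt v Fact.out hzp hvp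
  choose! e he using hg
  have hU : v (∑ x : F, τ x * (T x : ℂ)) = 1 := by
    let P : ℤ[X] := ∑ x ∈ Finset.univ.erase (0 : F), (X : ℤ[X]) ^ ((Fintype.card F - 2) * e x) * ((T x : ℕ) : ℤ[X])
    have h1 : aeval z P = ∑ x : F, τ x * (T x : ℂ) := by
      rw [← Finset.add_sum_erase _ _ (Finset.mem_univ (0 : F)), MulChar.map_zero, zero_mul, zero_add]
      simp only [P, map_sum, map_mul, map_pow, aeval_X, map_natCast]
      refine Finset.sum_congr rfl fun x hx => ?_
      rw [pow_mul, ← hτ, ← map_pow, ← he x (Finset.ne_of_mem_erase hx)]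
    rw [← h1]
    apply hv
    have h2 : aeval g P = -1 := by
      rw [← u_char (p := p) hc, ← Finset.add_sum_erase _ _ (Finset.mem_univ (0 : F)), zero_pow (by omega), zero_mul, zero_add]
      simp only [P, map_sum, map_mul, map_pow, aeval_X, map_natCast]
      refine Finset.sum_congr rfl fun x hx => ?_
      rw [mul_comm (_ - 2), pow_mul, ← he x (Finset.ne_of_mem_erase hx)]
      congr 1
      conv_rhs => rw [← ZMod.natCast_zmod_val (Algebra.trace (ZMod p) F x)]
      rw [map_natCast]
    rw [h2]
    exact neg_ne_zero.2 one_ne_zero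
  have hG : gaussSum τ ψ = (zp - 1) * ∑ x : F, τ x * ∑ j ∈ Finset.range (T x), zp ^ j := by
    rw [Finset.mul_sum, ← sub_zero (gaussSum τ ψ), ← MulChar.sum_eq_zero_of_ne_one hτ1, gaussSum,
      ← Finset.sum_sub_distrib]
    refine Finset.sum_congr rfl fun x _ => ?_
    rw [hψ, mul_left_comm, mul_geom_sum]
    ring
  have hdiff : v (∑ x : F, τ x * ∑ j ∈ Finset.range (T x), zp ^ j - ∑ x : F, τ x * (T x : ℂ)) < 1 := by
    refine lt_of_le_of_lt ?_ hlt
    rw [← Finset.sum_sub_distrib]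
    refine v.map_sum_le fun x _ => ?_
    rw [← mul_sub, map_mul]
    refine (mul_le_of_le_one_left' (v_mulChar_le v τ x)).trans ?_
    have : ∑ j ∈ Finset.range (T x), zp ^ j - (T x : ℂ) = ∑ j ∈ Finset.range (T x), (zp ^ j - 1) := by
      simp
    rw [this]
    refine v.map_sum_le fun j _ => ?_
    rw [← mul_geom_sum, map_mul]
    refine mul_le_of_le_one_right' (v.map_sum_le fun i _ => ?_)
    rw [map_pow, hzp1, one_pow]
  have hone : v (∑ x : F, τ x * ∑ j ∈ Finset.range (T x), zp ^ j) = 1 := by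
    rw [← hU] at hdiff
    have := v.map_add_eq_of_lt_right hdiff
    rwa [sub_add_cancel, hU] at this
  rw [hG, map_mul, hone, mul_one]

lemma sum_A1 {A : Type} [AddCommGroup A] (g : ℕ → A) (M c : ℕ) (hc : c < 4) :
    ∑ k ∈ Finset.range M, g (c + 4 * k) = ∑ x ∈ (Finset.range (4 * M)).filter (fun x => x % 4 = c), g x := by
  refine Finset.sum_nbij' (fun k => c + 4 * k) (fun x => x / 4) ?_ ?_ ?_ ?_ ?_ <;>
    simp only [Finset.mem_range, Finset.mem_filter] <;> intros <;> first | omega | trivial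

lemma sum_A2 {A : Type} [AddCommGroup A] (g : ℕ → A) (M l c : ℕ) (hl : l % 2 = 1) (hc : c % 2 = 1) :
    ∑ k ∈ Finset.range M, g (l * ((c * l) % 4 + 4 * k)) =
      ∑ x ∈ ((Finset.range (4 * (l * M))).filter (fun x => x % 4 = c % 4)).filter (fun x => l ∣ x), g x := by
  have hl0 : 0 < l := by omega
  have h4 : ∀ y, (l * y) % 4 = c % 4 ↔ y % 4 = (c * l) % 4 := by
    intro y
    rw [Nat.mul_mod, Nat.mul_mod c l]
    have h1 : l % 4 = 1 ∨ l % 4 = 3 := by omega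
    have h2 : c % 4 = 1 ∨ c % 4 = 3 := by omega
    rcases h1 with h1 | h1 <;> rcases h2 with h2 | h2 <;> rw [h1, h2] <;> omega
  refine Finset.sum_nbij' (fun k => l * ((c * l) % 4 + 4 * k)) (fun x => x / l / 4) ?_ ?_ ?_ ?_ ?_
  · intro k hk
    simp only [Finset.mem_range, Finset.mem_filter] at *
    refine ⟨⟨?_, ?_⟩, Dvd.intro _ rfl⟩
    · rw [mul_left_comm]
      exact Nat.mul_lt_mul_of_pos_left (by omega) hl0
    · rw [h4]; omega
  · intro x hx
    simp only [Finset.mem_range, Finset.mem_filter] at *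
    obtain ⟨⟨h1, h2⟩, y, rfl⟩ := hx
    rw [Nat.mul_div_cancel_left _ hl0]
    rw [mul_left_comm] at h1
    have := Nat.lt_of_mul_lt_mul_left h1
    omega
  · intro k hk
    rw [Nat.mul_div_cancel_left _ hl0]; omega
  · intro x hx
    simp only [Finset.mem_range, Finset.mem_filter] at *
    obtain ⟨⟨h1, h2⟩, y, rfl⟩ := hx
    rw [Nat.mul_div_cancel_left _ hl0]
    rw [h4] at h2
    congr 1; omega
  · intros; rfl

lemma sum_orbit {p l r f : ℕ} (hl : l.Prime) (hlodd : l % 2 = 1) (hr : 1 ≤ r) (hp4 : p % 4 = 1)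
    (hpl : ¬ l ∣ p) (hf : orderOf (p : ZMod (4 * l ^ r)) = f) (hfv : f + l ^ (r - 1) = l ^ r)
    {c : ℕ} (hc : c % 2 = 1) (hcl : ¬ l ∣ c) {A : Type} [AddCommGroup A] (g : ℕ → A) :
    ∑ i ∈ Finset.range f, g (c * p ^ i % (4 * l ^ r)) =
      ∑ k ∈ Finset.range (l ^ r), g (c % 4 + 4 * k) -
        ∑ k ∈ Finset.range (l ^ (r - 1)), g (l * ((c * l) % 4 + 4 * k)) := by
  classical
  have hM : l * l ^ (r - 1) = l ^ r := by rw [← pow_succ']; congr 1; omega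
  have hMpos : 0 < l ^ r := pow_pos hl.pos r
  have hcN : Nat.Coprime (4 * l ^ r) c := by
    refine Nat.Coprime.mul_left ?_ (((Nat.Prime.coprime_iff_not_dvd hl).2 hcl).pow_left r)
    have : Nat.Coprime (2 ^ 2) c := Nat.Coprime.pow_left 2 (Nat.coprime_two_left.2 (Nat.odd_iff.2 hc))
    exact this
  let E := ((Finset.range (4 * l ^ r)).filter (fun x => x % 4 = c % 4)).filter (fun x => ¬ l ∣ x)
  have hE : ∀ {A : Type} [AddCommGroup A] (g : ℕ → A), ∑ x ∈ E, g x = ∑ k ∈ Finset.range (l ^ r), g (c % 4 + 4 * k) -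
        ∑ k ∈ Finset.range (l ^ (r - 1)), g (l * ((c * l) % 4 + 4 * k)) := by
    intro A _ g
    rw [sum_A1 g _ _ (Nat.mod_lt _ (by norm_num)), sum_A2 g _ l c hlodd hc, hM, eq_sub_iff_add_eq, add_comm]
    exact Finset.sum_filter_add_sum_filter_not _ _ _
  have hcard : E.card = f := by
    have := hE (fun _ => (1 : ℤ))
    simp only [Finset.sum_const, Finset.card_range, nsmul_eq_mul, mul_one] at this
    have h' : ((f + l ^ (r - 1) : ℕ) : ℤ) = ((l ^ r : ℕ) : ℤ) := by rw [hfv]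
    rw [Nat.cast_add] at h'
    have h'' : (E.card : ℤ) = f := by linarith
    exact_mod_cast h''
  have hinj : Set.InjOn (fun i => c * p ^ i % (4 * l ^ r)) (Finset.range f : Set ℕ) := by
    intro i hi j hj hij
    simp only [Finset.coe_range, Set.mem_Iio] at hi hj
    have h1 : c * p ^ i ≡ c * p ^ j [MOD 4 * l ^ r] := hij
    have h2 : p ^ i ≡ p ^ j [MOD 4 * l ^ r] := Nat.ModEq.cancel_left_of_coprime hcN h1
    have h3 := (ZMod.natCast_eq_natCast_iff _ _ _).2 h2
    push_cast at h3
    rw [← hf] at hi hj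
    exact pow_injOn_Iio_orderOf hi hj h3
  have himg : (Finset.range f).image (fun i => c * p ^ i % (4 * l ^ r)) = E := by
    refine Finset.eq_of_subset_of_card_le ?_ ?_
    · intro x hx
      obtain ⟨i, -, rfl⟩ := Finset.mem_image.1 hx
      simp only [E, Finset.mem_filter, Finset.mem_range]
      refine ⟨⟨Nat.mod_lt _ (by positivity), ?_⟩, ?_⟩
      · rw [Nat.mod_mul_right_mod, Nat.mul_mod, Nat.pow_mod, hp4]; simp
      · intro h
        rw [Nat.dvd_mod_iff ((dvd_pow_self l (by omega)).mul_left 4), hl.dvd_mul] at h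
        rcases h with h | h
        · exact hcl h
        · exact hpl (hl.dvd_of_dvd_pow h)
    · rw [Finset.card_image_of_injOn hinj, Finset.card_range, hcard]
  rw [← hE g, ← himg, Finset.sum_image hinj]

lemma sum_val {p l r f : ℕ} (hl : l.Prime) (hlodd : l % 2 = 1) (hr : 1 ≤ r) (hp4 : p % 4 = 1)
    (hpl : ¬ l ∣ p) (hf : orderOf (p : ZMod (4 * l ^ r)) = f) (hfv : f + l ^ (r - 1) = l ^ r)
    {c : ℕ} (hc : c % 2 = 1) (hcl : ¬ l ∣ c) :
    2 * ∑ i ∈ Finset.range f, (c * p ^ i % (4 * l ^ r)) ≤ (4 * l ^ r) * (f + if l % 4 = 1 then 0 else 1) := by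
  have h := sum_orbit hl hlodd hr hp4 hpl hf hfv hc hcl (fun x => (x : ℤ))
  have gs : ∀ n : ℕ, 2 * ∑ k ∈ Finset.range n, (k : ℤ) = n * (n - 1) := by
    intro n
    induction n with
    | zero => simp
    | succ n ih => rw [Finset.sum_range_succ, mul_add, ih]; push_cast; ring
  have hM : l * l ^ (r - 1) = l ^ r := by rw [← pow_succ']; congr 1; omega
  set M := l ^ r
  set M' := l ^ (r - 1)
  zify
  push_cast at h
  rw [h, ← Finset.mul_sum, Finset.sum_add_distrib, Finset.sum_add_distrib, ← Finset.mul_sum, ← Finset.mul_sum]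
  simp only [Finset.sum_const, Finset.card_range, nsmul_eq_mul]
  have g1 := gs M
  have g2 := gs M'
  zify at hM hfv
  have e : (2 : ℤ) * (M * (((c % 4 : ℕ) : ℤ)) + 4 * ∑ k ∈ Finset.range M, (k : ℤ) - l * (M' * (((c * l % 4 : ℕ)) : ℤ) + 4 * ∑ k ∈ Finset.range M', (k : ℤ)))
      = 4 * M * f + 2 * M * (((c % 4 : ℕ) : ℤ) - ((c * l % 4 : ℕ) : ℤ)) := by
    linear_combination 4 * g1 - 4 * l * g2 + (-2 * (((c * l % 4 : ℕ)) : ℤ) - 4 * M' + 4) * hM - 4 * M * hfv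
  push_cast at e
  rw [e]
  have h2 : c % 4 = 1 ∨ c % 4 = 3 := by omega
  have h1 : l % 4 = 1 ∨ l % 4 = 3 := by omega
  have hM0 : (0 : ℤ) ≤ M := by positivity
  have hcl4 : ((c : ℤ) * l % 4) = ((c % 4 : ℕ) * (l % 4 : ℕ) : ℤ) % 4 := by
    push_cast; rw [Int.mul_emod]
  have hc4 : ((c : ℤ) % 4) = (c % 4 : ℕ) := by push_cast; rfl
  have hl4 : ((l : ℤ) % 4) = (l % 4 : ℕ) := by push_cast; rfl
  rw [hcl4, hc4, hl4]
  rcases h1 with h1 | h1 <;> rcases h2 with h2 | h2 <;> rw [h1, h2] <;> norm_num <;> nlinarith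

lemma exists_V {p : ℕ} [Fact p.Prime] {F : Type} [Field F] [Fintype F] [Algebra (ZMod p) F]
    (hc : 2 < Fintype.card F) :
    ∃ V : ValuationSubring ℂ, V.valuation (p : ℂ) < 1 ∧ ∃ τ : MulChar F ℂ,
      orderOf τ = Fintype.card F - 1 ∧ (∀ χ : MulChar F ℂ, ∃ k < Fintype.card F - 1, τ ^ k = χ) ∧
      ∀ (zp : ℂ) (_ : IsPrimitiveRoot zp p) (ψ : AddChar F ℂ)
        (_ : ∀ x, ψ x = zp ^ (Algebra.trace (ZMod p) F x).val),
        V.valuation (gaussSum τ ψ) = V.valuation (zp - 1) := by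
  classical
  set q := Fintype.card F with hq
  have : NeZero (q - 1) := ⟨by omega⟩
  have hcu : Fintype.card Fˣ = q - 1 := by rw [Fintype.card_units]
  obtain ⟨u, hu⟩ := IsCyclic.exists_generator (α := Fˣ)
  have huo : orderOf u = q - 1 := by rw [orderOf_eq_card_of_forall_mem_zpowers hu, Nat.card_eq_fintype_card, hcu]
  have hg : IsPrimitiveRoot (u : F) (q - 1) := by
    rw [IsPrimitiveRoot.coe_units_iff, ← huo]; exact IsPrimitiveRoot.orderOf u
  have hgp : ∀ x : F, x ≠ 0 → ∃ n : ℕ, x = (u : F) ^ n := by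
    intro x hx
    obtain ⟨n, hn⟩ := (isOfFinOrder_of_finite u).mem_powers_iff_mem_zpowers.2 (hu (Units.mk0 x hx))
    refine ⟨n, ?_⟩
    have := congrArg Units.val hn
    simpa using this.symm
  have hz : IsPrimitiveRoot (Complex.exp (2 * Real.pi * Complex.I / ((q - 1 : ℕ) : ℂ))) (q - 1) :=
    Complex.isPrimitiveRoot_exp _ (by omega)
  set z := Complex.exp (2 * Real.pi * Complex.I / ((q - 1 : ℕ) : ℂ))
  obtain ⟨V, hV1, hV2⟩ := ex_val (by omega) hz hg (fun x => by
    by_cases hx : x = 0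
    · exact ⟨0, by simp [hx]⟩
    · obtain ⟨n, rfl⟩ := hgp x hx
      exact ⟨X ^ n, by simp⟩)
  have hvp : V.valuation (p : ℂ) < 1 := by
    have := hV1 (p : ℤ[X]) (by
      have : CharP F p := charP_of_injective_algebraMap (algebraMap (ZMod p) F).injective p
      rw [map_natCast]; exact CharP.cast_eq_zero F p)
    rwa [map_natCast] at this
  refine ⟨V, hvp, ?_⟩
  have hz' : IsPrimitiveRoot (z ^ (q - 2)) (q - 1) := by
    refine hz.pow_of_coprime _ ?_
    have e : q - 1 = (q - 2) + 1 := by omega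
    rw [e]; simp
  let w : ℂˣ := hz'.toRootsOfUnity
  have hw : w ∈ rootsOfUnity (Fintype.card Fˣ) ℂ := by
    rw [hcu]; exact hz'.toRootsOfUnity.2
  let τ : MulChar F ℂ := MulChar.ofRootOfUnity hw hu
  have hτ : τ u = z ^ (q - 2) := MulChar.ofRootOfUnity_spec hw hu
  have hτp : ∀ k, (τ ^ k) u = (z ^ (q - 2)) ^ k := by
    intro k; rw [MulChar.pow_apply_coe, hτ]
  have hord : orderOf τ = q - 1 := by
    refine Nat.dvd_antisymm (orderOf_dvd_of_pow_eq_one ?_) ?_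
    · rw [MulChar.eq_iff hu, hτp, hz'.pow_eq_one, MulChar.one_apply_coe]
    · apply hz'.dvd_of_pow_eq_one
      rw [← hτp, pow_orderOf_eq_one, MulChar.one_apply_coe]
  refine ⟨τ, hord, ?_, ?_⟩
  · intro χ
    have : (χ u) ^ (q - 1) = 1 := by
      rw [← map_pow, hg.pow_eq_one, map_one]
    obtain ⟨k, hk, hk2⟩ := hz'.eq_pow_of_pow_eq_one this
    refine ⟨k, hk, ?_⟩
    rw [MulChar.eq_iff hu, hτp, hk2]
  · intro zp hzp ψ hψ
    refine v_base hc V.valuation hzp hvp hV2 τ ?_ hgp hτ ψ hψ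
    intro h
    rw [h, orderOf_one] at hord
    omega

lemma v_main {p l r f : ℕ} [Fact p.Prime] (hl : l.Prime) (hlodd : l % 2 = 1) (hr : 1 ≤ r) (hp4 : p % 4 = 1)
    (hpl : ¬ l ∣ p) (hf : orderOf (p : ZMod (4 * l ^ r)) = f) (hfv : f + l ^ (r - 1) = l ^ r)
    {F : Type} [Field F] [Fintype F] [Algebra (ZMod p) F] (hcard : Fintype.card F = p ^ f)
    {Γ : Type} [LinearOrderedCommGroupWithZero Γ] (v : Valuation ℂ Γ) 
    {zp : ℂ} (hzp : IsPrimitiveRoot zp p) {ψ : AddChar F ℂ} (hψ1 : ψ ≠ 1)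
    (hfrob : ∀ χ : MulChar F ℂ, gaussSum (χ ^ p) ψ = gaussSum χ ψ)
    {τ : MulChar F ℂ} (hτ : orderOf τ = Fintype.card F - 1)
    (hvτ : v (gaussSum τ ψ) = v (zp - 1))
    {χ : MulChar F ℂ} (hχ : orderOf χ = 4 * l ^ r) {k : ℕ} (hk : k < Fintype.card F - 1) (hk2 : τ ^ k = χ) :
    v (p : ℂ) ^ (f + if l % 4 = 1 then 0 else 1) ≤ v (gaussSum χ ψ) ^ 2 := by
  set N := 4 * l ^ r with hN
  set q := Fintype.card F with hq
  have hMpos : 0 < l ^ r := pow_pos hl.pos r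
  have hN0 : 0 < N := by omega
  have hp1 : 1 < p := (Fact.out : p.Prime).one_lt
  have hmod : p ^ f % N = 1 % N := by
    have : ((p ^ f : ℕ) : ZMod N) = ((1 : ℕ) : ZMod N) := by
      push_cast; rw [← hf, pow_orderOf_eq_one]
    exact (ZMod.natCast_eq_natCast_iff _ _ _).1 this
  have hq1 : 1 < q := Fintype.one_lt_card
  obtain ⟨m, hm⟩ : N ∣ q - 1 := by
    rw [hcard]; exact (Nat.modEq_iff_dvd' (Nat.one_le_pow _ _ (by omega))).1 hmod.symm
  have hm0 : 0 < m := by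
    rcases Nat.eq_zero_or_pos m with h | h
    · rw [h] at hm; omega
    · exact h
  -- k = m * c
  have hdv : q - 1 ∣ k * N := by
    rw [← hτ]; apply orderOf_dvd_of_pow_eq_one
    rw [pow_mul, hk2, ← hχ, pow_orderOf_eq_one]
  obtain ⟨c, rfl⟩ : m ∣ k := by
    rw [hm, mul_comm N] at hdv
    exact Nat.dvd_of_mul_dvd_mul_right hN0 hdv
  have hcN : c < N := by
    rw [hm, mul_comm N] at hk
    exact Nat.lt_of_mul_lt_mul_left hk
  have hcop : Nat.gcd N c = 1 := by
    have ho : orderOf (τ ^ m) = N := by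
      rw [orderOf_pow_of_dvd hm0.ne' (by rw [hτ, hm]; exact Dvd.intro_left _ rfl), hτ, hm, Nat.mul_div_cancel _ hm0]
    have h2 := orderOf_pow' (τ ^ m) (n := c) (by
      rintro rfl
      rw [mul_zero, pow_zero] at hk2
      rw [← hk2, orderOf_one] at hχ; omega)
    rw [← pow_mul, hk2, hχ, ho] at h2
    have h3 := Nat.div_mul_cancel (Nat.gcd_dvd_left N c)
    rw [← h2] at h3
    exact Nat.eq_of_mul_eq_mul_left hN0 (h3.trans (mul_one N).symm)
  have hc2 : c % 2 = 1 := by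
    by_contra h
    have : 2 ∣ Nat.gcd N c := Nat.dvd_gcd (by omega) (by omega)
    omega
  have hcl : ¬ l ∣ c := by
    intro h
    have : l ∣ Nat.gcd N c := Nat.dvd_gcd ((dvd_pow_self l (by omega)).mul_left 4) h
    rw [hcop] at this
    exact hl.one_lt.ne' (Nat.dvd_one.1 this)
  let x : ℕ → ℕ := fun i => c * p ^ i % N
  let d : ℕ → ℕ := fun i => p * x i / N
  let A : ℕ → ℕ := fun n => Nat.rec 0 (fun n a => p * a + d n) n
  have hA0 : A 0 = 0 := rfl
  have hA : ∀ n, A (n + 1) = p * A n + d n := fun n => rfl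
  have hx0 : x 0 = c := by simp only [x, pow_zero, mul_one]; exact Nat.mod_eq_of_lt hcN
  have hxf : x f = c := by
    simp only [x]; rw [Nat.mul_mod, hmod, ← Nat.mul_mod, mul_one, Nat.mod_eq_of_lt hcN]
  have hxs : ∀ i, N * d i + x (i + 1) = p * x i := by
    intro i
    have h1 : x (i + 1) = p * x i % N := by
      simp only [x]; rw [Nat.mul_mod_mod, pow_succ]; congr 1; ring
    rw [h1]; exact Nat.div_add_mod _ _
  have hAN : ∀ n, N * A n + x n = p ^ n * c := by
    intro n
    induction n with
    | zero => rw [hA0, hx0]; ring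
    | succ n ih =>
      have := hxs n
      rw [hA]
      calc _ = p * (N * A n) + (N * d n + x (n + 1)) := by ring
        _ = p * (N * A n + x n) := by rw [this]; ring
        _ = _ := by rw [ih]; ring
  have hAf : A f = m * c := by
    have h1 := hAN f
    rw [hxf, ← hcard] at h1
    have h2 : q = N * m + 1 := by omega
    rw [h2] at h1
    have h3 : N * A f = N * (m * c) := by
      have : (N * m + 1) * c = N * (m * c) + c := by ring
      omega
    exact Nat.eq_of_mul_eq_mul_left hN0 h3
  have hsum : N * ∑ i ∈ Finset.range f, d i + ∑ i ∈ Finset.range f, x i = p * ∑ i ∈ Finset.range f, x i := by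
    have h1 : ∑ i ∈ Finset.range f, x (i + 1) = ∑ i ∈ Finset.range f, x i := by
      have h2 := Finset.sum_range_succ x f
      rw [Finset.sum_range_succ' x f, hx0, hxf] at h2
      omega
    rw [← h1, Finset.mul_sum, ← Finset.sum_add_distrib, h1, Finset.mul_sum]
    exact Finset.sum_congr rfl fun i _ => hxs i
  have hS := sum_val hl hlodd hr hp4 hpl hf hfv hc2 hcl
  set e := f + if l % 4 = 1 then 0 else 1 with he
  have hle : 2 * ∑ i ∈ Finset.range f, d i ≤ (p - 1) * e := by
    obtain ⟨p', rfl⟩ : ∃ p', p = p' + 1 := ⟨p - 1, by omega⟩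
    rw [Nat.add_sub_cancel]
    have h1 : N * ∑ i ∈ Finset.range f, d i = p' * ∑ i ∈ Finset.range f, x i := by
      have : (p' + 1) * ∑ i ∈ Finset.range f, x i = p' * ∑ i ∈ Finset.range f, x i + ∑ i ∈ Finset.range f, x i := by ring
      omega
    refine Nat.le_of_mul_le_mul_left ?_ hN0
    calc N * (2 * ∑ i ∈ Finset.range f, d i) = p' * (2 * ∑ i ∈ Finset.range f, x i) := by
          rw [mul_left_comm, h1]; ring
      _ ≤ p' * (N * e) := Nat.mul_le_mul_left _ hS
      _ = _ := by ring
  have hch := v_chain v hψ1 hfrob τ d A hA0 hA f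
  rw [hAf, hk2, hvτ] at hch
  have hz1 : v (zp - 1) ≤ 1 := (v.map_sub _ _).trans (by
    rw [v_rou v (Fact.out : p.Prime).ne_zero hzp.pow_eq_one, map_one, max_self])
  calc v (p : ℂ) ^ e ≤ (v (zp - 1) ^ (p - 1)) ^ e := pow_le_pow_left' (v_p_le v Fact.out hzp) _
    _ = v (zp - 1) ^ ((p - 1) * e) := (pow_mul _ _ _).symm
    _ ≤ v (zp - 1) ^ (2 * ∑ i ∈ Finset.range f, d i) := pow_le_pow_right_of_le_one' hz1 hle
    _ = (v (zp - 1) ^ (∑ i ∈ Finset.range f, d i)) ^ 2 := by rw [← pow_mul, mul_comm]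
    _ ≤ _ := pow_le_pow_left' hch 2

lemma v_int_le {Γ : Type} [LinearOrderedCommGroupWithZero Γ] (v : Valuation ℂ Γ) (m : ℤ) : v (m : ℂ) ≤ 1 := by
  have hnat : ∀ n : ℕ, v (n : ℂ) ≤ 1 := by
    intro n
    induction n with
    | zero => simp
    | succ n ih => push_cast; exact (v.map_add _ _).trans (max_le ih (by rw [map_one]))
  rcases Int.eq_nat_or_neg m with ⟨n, rfl | rfl⟩
  · exact_mod_cast hnat n
  · push_cast; rw [v.map_neg]; exact hnat n

lemma v_int_dvd {Γ : Type} [LinearOrderedCommGroupWithZero Γ] (v : Valuation ℂ Γ) {p : ℕ} (hp : p.Prime)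
    (hvp : v (p : ℂ) < 1) (n : ℕ) : ∀ m : ℤ, v (m : ℂ) ≤ v (p : ℂ) ^ n → (p : ℤ) ^ n ∣ m := by
  have hp0 : v (p : ℂ) ≠ 0 := by
    rw [Valuation.ne_zero_iff]; exact_mod_cast hp.ne_zero
  induction n with
  | zero => intro m _; simp
  | succ n ih =>
    intro m hm
    obtain ⟨m', rfl⟩ := ih m (hm.trans (pow_le_pow_right_of_le_one' hvp.le (by omega)))
    rw [pow_succ]
    refine mul_dvd_mul_left _ ?_
    have h1 : v (m' : ℂ) < 1 := by
      push_cast at hm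
      rw [map_mul, map_pow, pow_succ] at hm
      have hpos : 0 < v (p : ℂ) ^ n := zero_lt_iff.2 (pow_ne_zero _ hp0)
      exact lt_of_le_of_lt (le_of_mul_le_mul_left hm hpos) hvp
    by_contra hnd
    have hcop : IsCoprime (p : ℤ) m' := (Nat.prime_iff_prime_int.1 hp).coprime_iff_not_dvd.2 hnd
    obtain ⟨s, t, hst⟩ := hcop
    have h2 : v ((s : ℂ) * p + t * m') = 1 := by
      have : ((s * p + t * m' : ℤ) : ℂ) = 1 := by rw [hst]; simp
      push_cast at this
      rw [this, map_one]
    have h3 : v ((s : ℂ) * p + t * m') < 1 := by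
      refine v.map_add_lt ?_ ?_
      · rw [map_mul]; exact lt_of_le_of_lt (mul_le_of_le_one_left' (v_int_le v s)) hvp
      · rw [map_mul]; exact lt_of_le_of_lt (mul_le_of_le_one_left' (v_int_le v t)) h1
    exact absurd h2 h3.ne

lemma int_of_integral {Y : ℂ} (hY : IsIntegral ℤ Y) {D : ℕ} (hD : D ≠ 0) {a : ℤ} (h : D * Y = a) :
    ∃ m : ℤ, Y = m := by
  have h1 : Y = algebraMap ℚ ℂ (a / D) := by
    have : (D : ℂ) ≠ 0 := by exact_mod_cast hD
    rw [eq_ratCast]; push_cast; field_simp; rw [mul_comm]; exact h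
  rw [h1, isIntegral_algebraMap_iff (algebraMap ℚ ℂ).injective] at hY
  obtain ⟨m, hm⟩ := IsIntegrallyClosed.isIntegral_iff.1 hY
  exact ⟨m, by rw [h1, ← hm]; simp⟩

lemma final_X {X : ℂ} (hX : IsIntegral ℤ X) {D : ℕ} (hD : D ≠ 0) 
    (hDX : (D : ℂ) * X ∈ GaussianInt.toComplex.range) {Γ : Type} [LinearOrderedCommGroupWithZero Γ]
    (v : Valuation ℂ Γ) {p : ℕ} (hp : p.Prime) (hvp : v (p : ℂ) < 1) {n : ℕ}
    (h1 : v X ≤ v (p : ℂ) ^ n) (h2 : v (star X) ≤ v (p : ℂ) ^ n) {e : ℕ}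
    (hXX : X * star X = (p : ℂ) ^ (2 * n) * e) :
    ∃ a b : ℤ, X = (p : ℂ) ^ n * (a + b * Complex.I) ∧ a ^ 2 + b ^ 2 = e := by
  obtain ⟨⟨a, b⟩, hab⟩ := hDX
  rw [GaussianInt.toComplex_def'] at hab
  have hXs : IsIntegral ℤ (star X) := by
    have := hX.map (starRingEnd ℂ).toIntAlgHom
    exact this
  have hI : IsIntegral ℤ Complex.I := Complex.isPrimitiveRoot_I.isIntegral (by norm_num)
  have hab' : (D : ℂ) * star X = a - b * Complex.I := by
    have := congrArg star hab
    simp at this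
    rw [Complex.star_def, ← this]; ring
  obtain ⟨m, hm⟩ := int_of_integral (hX.add hXs) hD (a := 2 * a) (by push_cast; linear_combination -hab + hab')
  obtain ⟨k, hk⟩ := int_of_integral (Y := (X - star X) * (-Complex.I)) ((hX.sub hXs).mul hI.neg) hD (a := 2 * b) (by
    push_cast; linear_combination Complex.I * hab + Complex.I * hab' - 2 * b * Complex.I_sq)
  have hvI : v Complex.I = 1 := v_rou v (n := 4) (by norm_num) Complex.I_pow_four
  obtain ⟨m', rfl⟩ := v_int_dvd v hp hvp n m (by
    rw [← hm]; exact (v.map_add _ _).trans (max_le h1 h2))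
  obtain ⟨k', rfl⟩ := v_int_dvd v hp hvp n k (by
    rw [← hk, map_mul, v.map_neg, hvI, mul_one]; exact (v.map_sub _ _).trans (max_le h1 h2))
  push_cast at hm hk
  have hX2 : 2 * X = (p : ℂ) ^ n * (m' + k' * Complex.I) := by
    linear_combination hm + Complex.I * hk + (X - star X) * Complex.I_sq
  have hXs2 : 2 * star X = (p : ℂ) ^ n * (m' - k' * Complex.I) := by
    linear_combination hm - Complex.I * hk - (X - star X) * Complex.I_sq
  have hp0 : (p : ℂ) ≠ 0 := by exact_mod_cast hp.ne_zero
  have hsq : m' ^ 2 + k' ^ 2 = 4 * (e : ℤ) := by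
    have : ((m' : ℂ) ^ 2 + (k' : ℂ) ^ 2) = 4 * e := by
      have hne : (p : ℂ) ^ (2 * n) ≠ 0 := pow_ne_zero _ hp0
      apply mul_left_cancel₀ hne
      have h3 : (2 * X) * (2 * star X) = 4 * ((p : ℂ) ^ (2 * n) * e) := by rw [← hXX]; ring
      rw [hX2, hXs2] at h3
      rw [pow_mul'] at *
      linear_combination h3 + ((p : ℂ) ^ n) ^ 2 * k' ^ 2 * Complex.I_sq
    exact_mod_cast this
  have hev : 2 ∣ m' ∧ 2 ∣ k' := by
    have h4 : (m' ^ 2 + k' ^ 2) % 4 = 0 := by omega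
    rcases Int.emod_two_eq_zero_or_one m' with hm2 | hm2 <;> rcases Int.emod_two_eq_zero_or_one k' with hk2 | hk2
    · exact ⟨by omega, by omega⟩
    all_goals
      exfalso
      obtain ⟨s, hs⟩ : ∃ s, m' = 2 * s + m' % 2 := ⟨m' / 2, by omega⟩
      obtain ⟨t, ht⟩ : ∃ t, k' = 2 * t + k' % 2 := ⟨k' / 2, by omega⟩
      rw [hm2] at hs
      rw [hk2] at ht
      rw [hs, ht] at h4
      ring_nf at h4
      omega
  obtain ⟨⟨a', rfl⟩, ⟨b', rfl⟩⟩ := hev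
  refine ⟨a', b', ?_, by linarith⟩
  push_cast at hX2
  linear_combination hX2 / 2

lemma four_mem {z : ℂ} (h : z ^ 4 = 1) : z ∈ GaussianInt.toComplex.range := by
  have : (z - 1) * ((z + 1) * ((z - Complex.I) * (z + Complex.I))) = 0 := by
    linear_combination h - (z ^ 2 - 1) * Complex.I_sq
  have hI : Complex.I ∈ GaussianInt.toComplex.range := ⟨⟨0, 1⟩, by rw [GaussianInt.toComplex_def']; simp⟩
  rcases mul_eq_zero.1 this with h | h
  · rw [sub_eq_zero.1 h]; exact one_mem _
  rcases mul_eq_zero.1 h with h | h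
  · rw [eq_neg_of_add_eq_zero_left h]; exact neg_mem (one_mem _)
  rcases mul_eq_zero.1 h with h | h
  · rw [sub_eq_zero.1 h]; exact hI
  · rw [eq_neg_of_add_eq_zero_left h]; exact neg_mem hI

lemma geo_mem {w y : ℂ} {M : ℕ} (hw : w ^ M = 1) (hy : w = 1 → y ^ 4 = 1) :
    ∑ k ∈ Finset.range M, y * w ^ k ∈ GaussianInt.toComplex.range := by
  rw [← Finset.mul_sum]
  by_cases h : w = 1
  · refine mul_mem (four_mem (hy h)) ?_
    rw [h]; simp only [one_pow, Finset.sum_const, Finset.card_range, nsmul_eq_mul, mul_one]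
    exact natCast_mem _ _
  · rw [geom_sum_eq h, hw, sub_self, zero_div, mul_zero]; exact zero_mem _

lemma ram {p l r f : ℕ} (hl : l.Prime) (hlodd : l % 2 = 1) (hr : 1 ≤ r) (hp4 : p % 4 = 1)
    (hpl : ¬ l ∣ p) (hf : orderOf (p : ZMod (4 * l ^ r)) = f) (hfv : f + l ^ (r - 1) = l ^ r)
    {z : ℂ} (hz : z ^ (4 * l ^ r) = 1) :
    ∑ i ∈ Finset.range f, z ^ (p ^ i) ∈ GaussianInt.toComplex.range := by
  have h := sum_orbit hl hlodd hr hp4 hpl hf hfv (c := 1) (by norm_num) (by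
    intro h; exact hl.one_lt.ne' (Nat.dvd_one.1 h)) (fun x => z ^ x)
  have hM : l * l ^ (r - 1) = l ^ r := by rw [← pow_succ']; congr 1; omega
  simp only [one_mul] at h
  rw [Finset.sum_congr rfl (fun i _ => pow_eq_pow_mod (p ^ i) hz), h]
  refine sub_mem ?_ ?_
  · simp_rw [pow_add, pow_mul z 4]
    exact geo_mem (by rw [← pow_mul, hz]) (fun h => by rw [← pow_mul, mul_comm, pow_mul, h, one_pow])
  · simp_rw [mul_add, pow_add, ← mul_assoc, pow_mul z (l * 4)]
    refine geo_mem (by rw [← pow_mul, mul_assoc, mul_left_comm, hM, hz]) (fun h => ?_)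
    rw [← pow_mul, mul_right_comm, pow_mul, h, one_pow]

lemma gauss_int {F : Type} [Field F] [Fintype F] (χ : MulChar F ℂ) (ψ : AddChar F ℂ) :
    IsIntegral ℤ (gaussSum χ ψ) := by
  refine IsIntegral.sum _ fun x _ => IsIntegral.mul ?_ ?_
  · by_cases hx : x = 0
    · rw [hx, MulChar.map_zero]; exact isIntegral_zero
    · have h : 0 < Fintype.card F - 1 := by have := Fintype.one_lt_card (α := F); omega
      refine IsIntegral.of_pow h ?_
      rw [← map_pow, FiniteField.pow_card_sub_one_eq_one x hx, map_one]
      exact isIntegral_one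
  · refine IsIntegral.of_pow (Fintype.card_pos (α := F)) ?_
    rw [← AddChar.map_nsmul_eq_pow]
    simp [isIntegral_one]

lemma star_gauss {F : Type} [Field F] [Fintype F] (χ : MulChar F ℂ) (ψ : AddChar F ℂ) :
    star (gaussSum χ ψ) = gaussSum χ⁻¹ ψ⁻¹ := by
  rw [gaussSum, gaussSum, star_sum]
  refine Finset.sum_congr rfl fun x _ => ?_
  rw [star_mul', MulChar.star_apply', AddChar.inv_apply, Complex.star_def, ← AddChar.map_neg_eq_conj]

lemma v_star_gauss {F : Type} [Field F] [Fintype F] {Γ : Type} [LinearOrderedCommGroupWithZero Γ]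
    (v : Valuation ℂ Γ) (χ : MulChar F ℂ) (ψ : AddChar F ℂ) :
    v (star (gaussSum χ ψ)) = v (gaussSum χ⁻¹ ψ) := by
  rw [star_gauss, ← gaussSum_mulShift χ⁻¹ ψ (-1), map_mul, v_mulChar v _ (Units.ne_zero _), one_mul]
  congr 3
  rw [Units.val_neg, Units.val_one, AddChar.inv_mulShift]

lemma gal_mem {p l r f : ℕ} [Fact p.Prime] (hl : l.Prime) (hlodd : l % 2 = 1) (hr : 1 ≤ r) (hp4 : p % 4 = 1)
    (hpl : ¬ l ∣ p) (hf : orderOf (p : ZMod (4 * l ^ r)) = f) (hfv : f + l ^ (r - 1) = l ^ r)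
    {F : Type} [Field F] [Fintype F] [CharP F p]
    {χ : MulChar F ℂ} (hχ : χ ^ (4 * l ^ r) = 1) {h : F → ℂ} (hh : ∀ x, h x ∈ GaussianInt.toComplex.range)
    (hhp : ∀ x, h (x ^ p) = h x) :
    (f : ℂ) * ∑ x, χ x * h x ∈ GaussianInt.toComplex.range := by
  have hb : Function.Bijective (frobenius F p) :=
    (Finite.injective_iff_bijective).1 (frobenius_inj F p)
  have h1 : ∀ i : ℕ, ∑ x, χ x * h x = ∑ x, χ x ^ (p ^ i) * h x := by
    intro i
    induction i with
    | zero => simp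
    | succ i ih =>
      rw [ih, ← hb.sum_comp]
      refine Finset.sum_congr rfl fun x _ => ?_
      rw [frobenius_def, hhp, map_pow, ← pow_mul, pow_succ']
  have h2 : (f : ℂ) * ∑ x, χ x * h x = ∑ x, (∑ i ∈ Finset.range f, χ x ^ (p ^ i)) * h x := by
    simp_rw [Finset.sum_mul]
    rw [Finset.sum_comm, ← Finset.sum_congr rfl (fun i _ => h1 i)]
    simp
  rw [h2]
  refine sum_mem fun x _ => mul_mem ?_ (hh x)
  by_cases hx : x = 0
  · rw [hx, MulChar.map_zero]
    refine sum_mem fun i _ => ?_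
    rw [zero_pow (pow_ne_zero _ (Fact.out : p.Prime).ne_zero)]; exact zero_mem _
  · refine ram hl hlodd hr hp4 hpl hf hfv ?_
    have hN : 4 * l ^ r ≠ 0 := by have := pow_pos hl.pos r; omega
    rw [← MulChar.pow_apply' χ hN, hχ, MulChar.one_apply (isUnit_iff_ne_zero.2 hx)]

lemma dec_sum {p : ℕ} [Fact p.Prime] {F : Type} [Field F] [Fintype F] [Algebra (ZMod p) F]
    (χ : MulChar F ℂ) (η : MulChar (ZMod p) ℂ) (hη : ∀ s, s ≠ 0 → η s = χ (algebraMap (ZMod p) F s))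
    (ψ : AddChar F ℂ) (ψ₀ : AddChar (ZMod p) ℂ) (hψ : ∀ x, ψ x = ψ₀ (Algebra.trace (ZMod p) F x)) :
    ((p - 1 : ℕ) : ℂ) * gaussSum χ ψ = ∑ x, χ x * gaussSum η (ψ₀.mulShift (Algebra.trace (ZMod p) F x)) := by
  classical
  have h1 : ∀ s ∈ Finset.univ.erase (0 : ZMod p), gaussSum χ ψ = ∑ x, χ x * (η s * ψ₀ (Algebra.trace (ZMod p) F x * s)) := by
    intro s hs
    have hs0 := Finset.ne_of_mem_erase hs
    have hs1 : algebraMap (ZMod p) F s ≠ 0 := by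
      rw [Ne, map_eq_zero]; exact hs0
    rw [gaussSum, ← Equiv.sum_comp (Equiv.mulLeft₀ _ hs1)]
    refine Finset.sum_congr rfl fun x _ => ?_
    change χ (algebraMap (ZMod p) F s * x) * ψ (algebraMap (ZMod p) F s * x) = _
    rw [map_mul, hψ, ← Algebra.smul_def, map_smul, hη s hs0, smul_eq_mul, mul_comm s]
    ring
  have h2 := Finset.sum_congr rfl h1
  rw [Finset.sum_const, Finset.card_erase_of_mem (Finset.mem_univ _), Finset.card_univ, ZMod.card, nsmul_eq_mul,
    Finset.sum_comm] at h2
  rw [h2]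
  refine Finset.sum_congr rfl fun x _ => ?_
  rw [← Finset.mul_sum, gaussSum, ← Finset.add_sum_erase _ _ (Finset.mem_univ (0 : ZMod p)), MulChar.map_zero, zero_mul,
    zero_add]
  rfl

lemma core {p l r f e : ℕ} [Fact p.Prime] (hl : l.Prime) (hlodd : l % 2 = 1) (hr : 1 ≤ r) (hp4 : p % 4 = 1)
    (hpl : ¬ l ∣ p) (hf : orderOf (p : ZMod (4 * l ^ r)) = f) (hfv : f + l ^ (r - 1) = l ^ r)
    {F : Type} [Field F] [Fintype F] [Algebra (ZMod p) F] (hcard : Fintype.card F = p ^ f)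
    (hfe : f % 2 = 0) (hf0 : 0 < f)
    {χ : MulChar F ℂ} (hχ : orderOf χ = 4 * l ^ r) (he : e = if l % 4 = 1 then 0 else 1)
    {zp : ℂ} (hzp : IsPrimitiveRoot zp p)
    (ψ : AddChar F ℂ) (ψ₀ : AddChar (ZMod p) ℂ) (hψ : ∀ x, ψ x = ψ₀ (Algebra.trace (ZMod p) F x))
    (hψ₀ : ∀ s, ψ₀ s = zp ^ s.val)
    (η : MulChar (ZMod p) ℂ) (hη : ∀ s, s ≠ 0 → η s = χ (algebraMap (ZMod p) F s))
    (hη2 : ∀ s, s ≠ 0 → η s = 1 ∨ η s = -1) (hg : gaussSum η ψ₀ ^ 2 = (p : ℂ) ^ e) :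
    ∃ a b : ℤ, gaussSum χ ψ * gaussSum η ψ₀ = (p : ℂ) ^ (f / 2) * (a + b * Complex.I) ∧ a ^ 2 + b ^ 2 = (p : ℤ) ^ e := by
  have hp : p.Prime := Fact.out
  have : CharP F p := charP_of_injective_algebraMap (algebraMap (ZMod p) F).injective p
  have hp0 : (p : ℂ) ≠ 0 := by exact_mod_cast hp.ne_zero
  have hψ' : ∀ x, ψ x = zp ^ (Algebra.trace (ZMod p) F x).val := fun x => by rw [hψ, hψ₀]
  have htr : ∀ x : F, Algebra.trace (ZMod p) F (x ^ p) = Algebra.trace (ZMod p) F x := by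
    intro x
    have := Algebra.trace_eq_of_algEquiv (FiniteField.frobeniusAlgEquivOfAlgebraic (ZMod p) F) x
    simpa using this
  have hfrob : ∀ χ : MulChar F ℂ, gaussSum (χ ^ p) ψ = gaussSum χ ψ :=
    gauss_frob_s14 p (fun x => by rw [hψ, hψ, htr])
  have hψ1 : ψ ≠ 1 := by
    intro h
    obtain ⟨x, hx⟩ := Algebra.trace_surjective (ZMod p) F 1
    have h1 := hψ' x
    have : Fact (1 < p) := ⟨hp.one_lt⟩
    rw [h, hx, ZMod.val_one, pow_one, AddChar.one_apply] at h1
    exact hzp.ne_one hp.one_lt h1.symm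
  have hχ1 : χ ≠ 1 := by
    rintro rfl
    rw [orderOf_one] at hχ
    have := pow_pos hl.pos r
    omega
  have hcard2 : 2 < Fintype.card F := by
    rw [hcard]
    calc 2 < p := by have := hp.two_le; omega
      _ = p ^ 1 := (pow_one p).symm
      _ ≤ p ^ f := Nat.pow_le_pow_right hp.pos hf0
  obtain ⟨V, hvp, τ, hτ, hgen, hvτ⟩ := exists_V (p := p) hcard2
  set v := V.valuation
  have hmain : ∀ χ : MulChar F ℂ, orderOf χ = 4 * l ^ r → v (p : ℂ) ^ (f + e) ≤ v (gaussSum χ ψ) ^ 2 := by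
    intro χ hχ
    obtain ⟨k, hk, hk2⟩ := hgen χ
    rw [he]
    exact v_main hl hlodd hr hp4 hpl hf hfv hcard v hzp hψ1 hfrob hτ (hvτ zp hzp ψ hψ') hχ hk hk2
  set G := gaussSum χ ψ with hG
  set g := gaussSum η ψ₀ with hgdef
  have hA := hmain χ hχ
  have hB := hmain χ⁻¹ (by rw [orderOf_inv, hχ])
  rw [← v_star_gauss, ← hG] at hB
  have hGG : G * star G = (p : ℂ) ^ f := by
    rw [hG, star_gauss, gaussSum_mul_gaussSum_eq_card hχ1 (AddChar.IsPrimitive.of_ne_one hψ1), hcard]; push_cast; rfl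
  have hvG : v G * v (star G) = v (p : ℂ) ^ f := by rw [← map_mul, hGG, map_pow]
  have hsg : (star g) ^ 2 = (p : ℂ) ^ e := by
    rw [← star_pow, hg]; simp
  have hvp0 : v (p : ℂ) ≠ 0 := by rw [Valuation.ne_zero_iff]; exact hp0
  have hpos : ∀ n, 0 < v (p : ℂ) ^ n := fun n => zero_lt_iff.2 (pow_ne_zero _ hvp0)
  have hsqf : v (p : ℂ) ^ f = (v (p : ℂ) ^ (f / 2)) ^ 2 := by rw [← pow_mul]; congr 1; omega
  have hgn : v g ^ 2 = v (p : ℂ) ^ e := by rw [← map_pow, hg, map_pow]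
  have hsgn : v (star g) ^ 2 = v (p : ℂ) ^ e := by rw [← map_pow, hsg, map_pow]
  have bound : ∀ a b c : ℂ, v a * v b = v (p : ℂ) ^ f → v (p : ℂ) ^ (f + e) ≤ v b ^ 2 → v c ^ 2 = v (p : ℂ) ^ e →
      v (a * c) ≤ v (p : ℂ) ^ (f / 2) := by
    intro a b c h1 h2 h3
    refine (pow_le_pow_iff_left₀ zero_le zero_le two_ne_zero).1 ?_
    rw [← hsqf, map_mul, mul_pow, h3]
    refine le_of_mul_le_mul_right ?_ (hpos f)
    calc v a ^ 2 * v (p : ℂ) ^ e * v (p : ℂ) ^ f = v a ^ 2 * v (p : ℂ) ^ (f + e) := by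
          rw [mul_assoc, ← pow_add, add_comm e]
      _ ≤ v a ^ 2 * v b ^ 2 := mul_le_mul_right h2 _
      _ = v (p : ℂ) ^ f * v (p : ℂ) ^ f := by rw [← mul_pow, h1, sq]
  have b1 := bound G (star G) g hvG hB hgn
  have b2 := bound (star G) G (star g) (by rw [mul_comm, hvG]) hA hsgn
  have hgg : g * star g = (p : ℂ) ^ e := by
    have h1 : g * star g = ((‖g‖ ^ 2 : ℝ) : ℂ) := by
      rw [Complex.star_def, Complex.mul_conj, Complex.normSq_eq_norm_sq]
    rw [h1, ← norm_pow, hg]; simp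
  have hD0 : f * (p - 1) ≠ 0 := by
    have := hp.one_lt
    exact Nat.mul_ne_zero (by omega) (by omega)
  have hquo : ∀ s, ∃ y ∈ GaussianInt.toComplex.range, gaussSum η (ψ₀.mulShift s) * g = y := by
    intro s
    refine ⟨_, ?_, rfl⟩
    by_cases hs : s = 0
    · by_cases h1 : η = 1
      · have : g = -1 := by
          rw [hgdef, h1]; apply gauss_one
          intro h
          apply hψ1
          ext x
          rw [hψ, h]; rfl
        rw [this, hs, gaussSum]
        refine mul_mem (sum_mem fun t _ => ?_) (neg_mem (one_mem _))
        rw [AddChar.mulShift_zero, AddChar.one_apply, mul_one]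
        by_cases ht : t = 0
        · rw [ht, MulChar.map_zero]; exact zero_mem _
        · rw [h1, MulChar.one_apply (isUnit_iff_ne_zero.2 ht)]; exact one_mem _
      · have : gaussSum η (ψ₀.mulShift s) = 0 := by
          rw [hs, gaussSum]; simp [MulChar.sum_eq_zero_of_ne_one h1]
        rw [this, zero_mul]; exact zero_mem _
    · have h1 := gaussSum_mulShift η ψ₀ (Units.mk0 s hs)
      rw [Units.val_mk0, ← hgdef] at h1
      have hpe : (p : ℂ) ^ e ∈ GaussianInt.toComplex.range := pow_mem (_root_.natCast_mem _ _) _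
      rcases hη2 s hs with h2 | h2
      · rw [h2, one_mul] at h1
        rw [h1, ← sq, hg]; exact hpe
      · have : gaussSum η (ψ₀.mulShift s) = - g := by rw [h2] at h1; linear_combination -h1
        rw [this, neg_mul, ← sq, hg]; exact neg_mem hpe
  obtain ⟨a, b, hab, hab2⟩ := final_X (X := G * g) ((gauss_int _ _).mul (gauss_int _ _)) hD0 (by
      have h1 := gal_mem hl hlodd hr hp4 hpl hf hfv (χ := χ) (by rw [← hχ, pow_orderOf_eq_one])
        (h := fun x => gaussSum η (ψ₀.mulShift (Algebra.trace (ZMod p) F x)) * g)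
        (fun x => by obtain ⟨y, hy, h⟩ := hquo (Algebra.trace (ZMod p) F x); rw [h]; exact hy)
        (fun x => by rw [htr])
      have h2 := dec_sum χ η hη ψ ψ₀ hψ
      simp_rw [← mul_assoc] at h1
      rw [← Finset.sum_mul, ← h2] at h1
      convert h1 using 1
      push_cast; ring) v hp hvp (n := f / 2) b1 (by rw [star_mul']; exact b2) (e := p ^ e) (by
      have : 2 * (f / 2) = f := by omega
      rw [this, star_mul', Nat.cast_pow, ← hGG, ← hgg]; ring)
  exact ⟨a, b, hab, by rw [hab2]; push_cast; rfl⟩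

lemma eta_exists {p : ℕ} [Fact p.Prime] {F : Type} [Field F] [Fintype F] [Algebra (ZMod p) F] (χ : MulChar F ℂ) :
    ∃ η : MulChar (ZMod p) ℂ, ∀ s, η s = χ (algebraMap (ZMod p) F s) := by
  refine ⟨⟨χ.toMonoidHom.comp (algebraMap (ZMod p) F).toMonoidHom, ?_⟩, fun s => rfl⟩
  intro a ha
  have h0 : a = 0 := by
    by_contra h
    exact ha (isUnit_iff_ne_zero.2 h)
  change χ (algebraMap (ZMod p) F a) = 0
  rw [h0, map_zero, MulChar.map_zero]

lemma not_dvd_pred {p l r : ℕ} (hp : 1 < p) (hl : l.Prime) (hlodd : l % 2 = 1) (hr : 1 ≤ r)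
    (hord : orderOf (p : ZMod (l ^ r)) = Nat.totient (l ^ r)) : ¬ l ∣ p - 1 := by
  intro h
  have h1 : ((l : ℕ) : ℤ) ∣ (p : ℤ) - 1 := by
    have : ((p - 1 : ℕ) : ℤ) = (p : ℤ) - 1 := by push_cast [hp.le]; rfl
    rw [← this]; exact_mod_cast h
  have h2 := dvd_sub_pow_of_dvd_sub h1 (r - 1)
  rw [one_pow, Nat.sub_add_cancel hr] at h2
  have h3 : (p : ZMod (l ^ r)) ^ (l ^ (r - 1)) = 1 := by
    have h4 := (ZMod.intCast_zmod_eq_zero_iff_dvd ((p : ℤ) ^ l ^ (r - 1) - 1) (l ^ r)).2 (by push_cast; exact h2)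
    push_cast at h4
    exact sub_eq_zero.1 h4
  have h4 := orderOf_le_of_pow_eq_one (pow_pos hl.pos _) h3
  rw [hord, Nat.totient_prime_pow hl (by omega)] at h4
  have h5 : 2 ≤ l - 1 := by have := hl.two_le; omega
  have h6 := pow_pos hl.pos (r - 1)
  nlinarith

lemma geom_mod4 {p : ℕ} (hp4 : p % 4 = 1) (f : ℕ) : (∑ i ∈ Finset.range f, p ^ i) % 4 = f % 4 := by
  induction f with
  | zero => rfl
  | succ f ih =>
    rw [Finset.sum_range_succ, Nat.add_mod, ih, Nat.pow_mod, hp4, one_pow]; omega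

lemma f_facts {l r f : ℕ} (hl : l.Prime) (hlodd : l % 2 = 1) (hr : 1 ≤ r)
    (hind : f = Nat.totient (4 * l ^ r) / 2) :
    f + l ^ (r - 1) = l ^ r ∧ 0 < f ∧ (l % 4 = 1 → f % 4 = 0) ∧ (l % 4 = 3 → f % 4 = 2) := by
  have hc : Nat.Coprime 4 (l ^ r) := by
    apply Nat.Coprime.pow_right
    have : Nat.Coprime 2 l := by
      rw [Nat.coprime_two_left]; exact Nat.odd_iff.2 hlodd
    exact this.pow_left 2
  have h4 : Nat.totient 4 = 2 := by decide
  rw [Nat.totient_mul hc, h4, Nat.totient_prime_pow hl (by omega), Nat.mul_div_cancel_left _ two_pos] at hind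
  have hlp := pow_pos hl.pos (r - 1)
  have hodd : (l ^ (r - 1)) % 2 = 1 := by rw [Nat.pow_mod, hlodd, one_pow]; rfl
  have h2 := hl.two_le
  refine ⟨?_, ?_, ?_, ?_⟩
  · obtain ⟨k, rfl⟩ : ∃ k, r = k + 1 := ⟨r - 1, by omega⟩
    obtain ⟨m, rfl⟩ : ∃ m, l = m + 1 := ⟨l - 1, by omega⟩
    rw [hind]; simp only [Nat.add_sub_cancel]; ring
  · rw [hind]; exact Nat.mul_pos hlp (by omega)
  · intro h
    have : (l - 1) % 4 = 0 := by omega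
    rw [hind, Nat.mul_mod, this, mul_zero]; rfl
  · intro h
    have : (l - 1) % 4 = 2 := by omega
    rw [hind, Nat.mul_mod, this]
    have h5 : l ^ (r - 1) % 4 = 1 ∨ l ^ (r - 1) % 4 = 3 := by omega
    rcases h5 with h5 | h5 <;> rw [h5]

lemma main14 (p l r f : ℕ) [Fact p.Prime] (hl : l.Prime) (hlodd : l % 2 = 1)
    (hr : 1 ≤ r) (hNp : Nat.gcd (4 * l ^ r) p = 1) (hp4 : p % 4 = 1)
    (hord : orderOf (p : ZMod (l ^ r)) = Nat.totient (l ^ r))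
    (hf : orderOf (p : ZMod (4 * l ^ r)) = f) (hind : f = Nat.totient (4 * l ^ r) / 2)
    (F : Type) [Field F] [Fintype F] [Algebra (ZMod p) F]
    (hcard : Fintype.card F = p ^ f)
    (χ : MulChar F ℂ) (hχord : orderOf χ = 4 * l ^ r) (e : ℕ) (he : e = if l % 4 = 1 then 0 else 1) :
    ∃ (g : ℂ) (a b : ℤ), g ^ 2 = (p : ℂ) ^ e ∧ gaussSumN p χ 1 * g = (p : ℂ) ^ (f / 2) * (a + b * Complex.I) ∧
      a ^ 2 + b ^ 2 = (p : ℤ) ^ e := by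
  have hp : p.Prime := Fact.out
  obtain ⟨hfv, hf0, hf1, hf3⟩ := f_facts hl hlodd hr hind
  have hpl : ¬ l ∣ p := by
    intro h
    have : l ∣ Nat.gcd (4 * l ^ r) p := Nat.dvd_gcd ((dvd_pow_self l (by omega)).mul_left 4) h
    rw [hNp] at this
    exact hl.one_lt.ne' (Nat.dvd_one.1 this)
  have hpl1 := not_dvd_pred hp.one_lt hl hlodd hr hord
  have hzp : IsPrimitiveRoot (zetaP p) p := Complex.isPrimitiveRoot_exp p hp.ne_zero
  have : NeZero p := ⟨hp.ne_zero⟩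
  obtain ⟨ψ₀, hψ₀, hprim⟩ : ∃ ψ₀ : AddChar (ZMod p) ℂ, (∀ s, ψ₀ s = zetaP p ^ s.val) ∧ ψ₀.IsPrimitive :=
    ⟨AddChar.zmodChar p hzp.pow_eq_one, AddChar.zmodChar_apply _, AddChar.zmodChar_primitive_of_primitive_root p hzp⟩
  have hψ₀1 : ψ₀ ≠ 1 := by
    intro h
    have h1 := hψ₀ 1
    have : Fact (1 < p) := ⟨hp.one_lt⟩
    rw [h, ZMod.val_one, pow_one, AddChar.one_apply] at h1
    exact hzp.ne_one hp.one_lt h1.symm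
  obtain ⟨ψ, hψ⟩ : ∃ ψ : AddChar F ℂ, ∀ x, ψ x = ψ₀ (Algebra.trace (ZMod p) F x) :=
    ⟨ψ₀.compAddMonoidHom (Algebra.trace (ZMod p) F).toAddMonoidHom, fun x => rfl⟩
  obtain ⟨η, hη⟩ := eta_exists (p := p) χ
  have hG : gaussSumN p χ 1 = gaussSum χ ψ := by
    classical
    rw [gaussSumN, gaussSum, pow_one, Finset.sum_filter]
    refine Finset.sum_congr rfl fun x _ => ?_
    by_cases hx : x = 0
    · simp [hx, MulChar.map_zero]
    · rw [if_pos hx, hψ, hψ₀]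
  set B := ∑ i ∈ Finset.range f, p ^ i with hB
  have hB4 : B % 4 = f % 4 := geom_mod4 hp4 f
  have hBq : B * (p - 1) = p ^ f - 1 := by
    have := geom_sum_mul_of_one_le hp.one_lt.le f
    exact this
  have hB' : B = (p ^ f - 1) / (p - 1) := Nat.geomSum_eq hp.two_le f
  have hlB : l ^ r ∣ B := by
    have h1 : l ^ r ∣ p ^ f - 1 := by
      have h2 : (p : ZMod (4 * l ^ r)) ^ f = 1 := by rw [← hf]; exact pow_orderOf_eq_one _
      have h3 : ((p ^ f : ℕ) : ZMod (4 * l ^ r)) = (1 : ℕ) := by push_cast; exact h2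
      rw [ZMod.natCast_eq_natCast_iff] at h3
      exact (Dvd.intro_left 4 rfl).trans ((Nat.modEq_iff_dvd' (Nat.one_le_pow _ _ hp.pos)).1 h3.symm)
    rw [← hBq] at h1
    exact Nat.Coprime.dvd_of_dvd_mul_right ((hl.coprime_iff_not_dvd.2 hpl1).pow_left r) h1
  have hc : Nat.Coprime 4 (l ^ r) := by
    apply Nat.Coprime.pow_right
    have : Nat.Coprime 2 l := by
      rw [Nat.coprime_two_left]; exact Nat.odd_iff.2 hlodd
    exact this.pow_left 2
  have hnorm : ∀ y : F, algebraMap (ZMod p) F (Algebra.norm (ZMod p) y) = y ^ B := by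
    intro y
    rw [FiniteField.algebraMap_norm_eq_pow, Nat.card_eq_fintype_card, Nat.card_eq_fintype_card, hcard, ZMod.card, hB']
  have hηB : ∀ s : ZMod p, ∃ y : F, Algebra.norm (ZMod p) y = s ∧ η s = χ y ^ B := by
    intro s
    obtain ⟨y, hy⟩ := FiniteField.norm_surjective (ZMod p) F s
    exact ⟨y, hy, by rw [hη, ← hy, hnorm, map_pow]⟩
  have hpw : ∀ (y : F) (n : ℕ), y ≠ 0 → 4 * l ^ r ∣ n → χ y ^ n = 1 := by
    intro y n hy hn
    by_cases h0 : n = 0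
    · rw [h0, pow_zero]
    · rw [← MulChar.pow_apply' χ h0, orderOf_dvd_iff_pow_eq_one.1 (hχord ▸ hn), MulChar.one_apply (isUnit_iff_ne_zero.2 hy)]
  have hy0 : ∀ (s : ZMod p) (y : F), s ≠ 0 → Algebra.norm (ZMod p) y = s → y ≠ 0 := by
    rintro s y hs hy rfl
    rw [Algebra.norm_zero] at hy
    exact hs hy.symm
  have key : (∀ s, s ≠ 0 → η s = 1 ∨ η s = -1) ∧ gaussSum η ψ₀ ^ 2 = (p : ℂ) ^ e := by
    by_cases hl4 : l % 4 = 1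
    · have h4 : 4 ∣ B := Nat.dvd_of_mod_eq_zero (by rw [hB4, hf1 hl4])
      have hNB := hc.mul_dvd_of_dvd_of_dvd h4 hlB
      have h1 : ∀ s, s ≠ 0 → η s = 1 := by
        intro s hs
        obtain ⟨y, hy, h⟩ := hηB s
        rw [h, hpw y B (hy0 s y hs hy) hNB]
      have hη1 : η = 1 := by
        ext s
        rw [h1 s s.ne_zero, MulChar.one_apply s.isUnit]
      refine ⟨fun s hs => Or.inl (h1 s hs), ?_⟩
      rw [hη1, gauss_one hψ₀1, he, if_pos hl4]; norm_num
    · have hl3 : l % 4 = 3 := by omega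
      have hB2 : B % 4 = 2 := by rw [hB4, hf3 hl3]
      have hNB : 4 * l ^ r ∣ B * 2 := hc.mul_dvd_of_dvd_of_dvd (by omega) (hlB.mul_right 2)
      have h1 : ∀ s, s ≠ 0 → η s = 1 ∨ η s = -1 := by
        intro s hs
        obtain ⟨y, hy, h⟩ := hηB s
        have h2 := hpw y (B * 2) (hy0 s y hs hy) hNB
        rw [pow_mul, ← h] at h2
        exact sq_eq_one_iff.1 h2
      have hη1 : η ≠ 1 := by
        intro h
        have h2 : χ ^ B = 1 := by
          ext y
          rw [MulChar.pow_apply_coe, MulChar.one_apply y.isUnit, ← map_pow, ← hnorm, ← hη, h, MulChar.one_apply]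
          rw [isUnit_iff_ne_zero, Ne, Algebra.norm_eq_zero_iff]
          exact y.ne_zero
        have h3 := orderOf_dvd_of_pow_eq_one h2
        rw [hχord] at h3
        have h4 : 4 ∣ B := (Dvd.intro _ rfl).trans h3
        omega
      refine ⟨h1, ?_⟩
      have hq : η.IsQuadratic := by
        intro s
        by_cases hs : s = 0
        · left; rw [hs, MulChar.map_zero]
        · right; exact h1 s hs
      rw [gaussSum_sq hη1 hq hprim, he, if_neg hl4, ZMod.card, pow_one]
      obtain ⟨t, ht⟩ := (ZMod.exists_sq_eq_neg_one_iff (p := p)).2 (by omega)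
      have ht0 : t ≠ 0 := by
        rintro rfl
        rw [mul_zero] at ht
        exact one_ne_zero (neg_eq_zero.1 ht)
      rw [ht, map_mul]
      rcases h1 t ht0 with h | h <;> rw [h] <;> ring
  obtain ⟨a, b, h1, h2⟩ := core hl hlodd hr hp4 hpl hf hfv hcard (by
    have : l % 4 = 1 ∨ l % 4 = 3 := by omega
    rcases this with h | h
    · have := hf1 h; omega
    · have := hf3 h; omega) hf0 hχord he hzp ψ ψ₀ hψ hψ₀ η (fun s _ => hη s) key.1 key.2
  exact ⟨_, a, b, key.2, by rw [hG, h1], h2⟩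

theorem statement14 (p l r N f : ℕ) (hp : p.Prime) (hl : l.Prime) (hlodd : l % 2 = 1)
    (hr : 1 ≤ r) (hN : N = 4 * l ^ r) (hNp : Nat.gcd N p = 1) (hp4 : p % 4 = 1)
    (hord : orderOf (p : ZMod (l ^ r)) = Nat.totient (l ^ r))
    (hf : orderOf (p : ZMod N) = f) (hind : f = Nat.totient N / 2)
    (F : Type) [Field F] [Fintype F] [Algebra (ZMod p) F]
    (hcard : Fintype.card F = p ^ f)
    (χ : MulChar F ℂ) (hχord : orderOf χ = N) :
    (l % 4 = 1 →
      ∃ ε : ℂ, (ε = 1 ∨ ε = -1 ∨ ε = Complex.I ∨ ε = -Complex.I) ∧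
        gaussSumN p χ 1 = ε * (p : ℂ) ^ ((f : ℤ) / 2)) ∧
    (l % 4 = 3 →
      ∃ ε : ℂ, (ε = 1 ∨ ε = -1 ∨ ε = Complex.I ∨ ε = -Complex.I) ∧
        ∃ a b : ℤ, a ^ 2 + b ^ 2 = (p : ℤ) ∧
          gaussSumN p χ 1 =
            ε * (Real.sqrt p : ℂ) * (p : ℂ) ^ ((f : ℤ) / 2 - 1) *
              ((a : ℂ) + (b : ℂ) * Complex.I)) := by
  subst hN
  haveI : Fact p.Prime := ⟨hp⟩
  have hp0 : (p : ℂ) ≠ 0 := by exact_mod_cast hp.ne_zero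
  have hz : (p : ℂ) ^ ((f : ℤ) / 2) = (p : ℂ) ^ (f / 2) := by
    have : (f : ℤ) / 2 = ((f / 2 : ℕ) : ℤ) := by push_cast; rfl
    rw [this, zpow_natCast]
  obtain ⟨g, a, b, hg, hX, hab⟩ := main14 p l r f hl hlodd hr hNp hp4 hord hf hind F hcard χ hχord _ rfl
  constructor
  · intro h1
    rw [if_pos h1, pow_zero] at hg hab
    have hgG : gaussSumN p χ 1 = g * (a + b * Complex.I) * (p : ℂ) ^ (f / 2) := by
      linear_combination g * hX - gaussSumN p χ 1 * hg
    refine ⟨g * (a + b * Complex.I), ?_, by rw [hz, hgG]⟩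
    have hu : (a = 0 ∧ b = 1) ∨ (a = 0 ∧ b = -1) ∨ (a = 1 ∧ b = 0) ∨ (a = -1 ∧ b = 0) := by
      have ha : a ≤ 1 := by nlinarith [sq_nonneg b]
      have ha' : -1 ≤ a := by nlinarith [sq_nonneg b]
      have hb : b ≤ 1 := by nlinarith [sq_nonneg a]
      have hb' : -1 ≤ b := by nlinarith [sq_nonneg a]
      interval_cases a <;> interval_cases b <;> simp_all
    rcases sq_eq_one_iff.1 hg with rfl | rfl <;>
    rcases hu with ⟨rfl, rfl⟩ | ⟨rfl, rfl⟩ | ⟨rfl, rfl⟩ | ⟨rfl, rfl⟩ <;> simp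
  · intro h3
    rw [if_neg (by omega), pow_one] at hg hab
    have hs : ((Real.sqrt p : ℝ) : ℂ) ^ 2 = p := by
      rw [← Complex.ofReal_pow, Real.sq_sqrt (by positivity)]; simp
    have hgG : gaussSumN p χ 1 = g * (p : ℂ) ^ ((f : ℤ) / 2 - 1) * (a + b * Complex.I) := by
      rw [zpow_sub_one₀ hp0, hz]
      field_simp
      linear_combination g * hX - gaussSumN p χ 1 * hg
    rcases sq_eq_sq_iff_eq_or_eq_neg.1 (hg.trans hs.symm) with h | h
    · exact ⟨1, Or.inl rfl, a, b, hab, by rw [hgG, h]; ring⟩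
    · exact ⟨-1, Or.inr (Or.inl rfl), a, b, hab, by rw [hgG, h]; ring⟩
end
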